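/- Every 5-connected graph contains an edge whose contraction yields a quasi 5-connected graph. -/

import Mathlib

/-!
Suppose that no contraction of an edge of the 5-connected graph `G` is quasi 5-connected. A small
separation of `G / xy` must contain the contracted vertex, so it comes from a 5-cut of `G` that
contains `x` and `y` and has at least two vertices on both sides (`exists_cut`). Hence every edge
lies in such a nontrivial 5-cut; these are called `Cut` here, and the whole argument is about how
they cross. The basic tool is that a nonempty corner of two crossing cuts has a boundary of at least
five vertices (`corner`), every vertex of which has a neighbour in the corner if there are exactly
five.

A side of minimum size has exactly two vertices (`exists_pair`). Cuts through an edge leaving a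
larger side `A` of minimum size would cut `A` into single vertices, so `|A| ≤ 4`, and then the
adjacencies forced by tight corners are contradictory.

Let `{u, v}` be a side with neighbourhood `T`. Some `x` in `T` lies in no cut with both `u` and `v`
(`exists_not_both`). Cuts through `ux` and `vx` show that `u` and `v` are adjacent, that each of them
misses one vertex of `T`, say `d` and `c`, and that there are again sides with two vertices, of the
form `{c, e}` and `{d, e'}`, whose cuts contain `u, x` and `v, x` (`exists_nbhd`). Cuts through
`u, v, c` and `u, v, d` leave only two possibilities for the edges inside `T = {c, d, p, q, r}`
(`Shape`).

In the first one, `e = e'` and the four vertices `c, d, e, p` have at most four neighbours, which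
contradicts 5-connectedness (`not_first`). So every two-vertex side is of the second shape, where
`p, q, r` are pairwise nonadjacent. Passing from `{u, v}` to `{c, e}` and from there to a side
`{x, g}` makes `u` and `v` neighbours of `x` in conflict with that independence (`second_aux`).
-/

open SimpleGraph Set

variable {V : Type*}

/-- `G` is `k`-connected: more than `k` vertices and removing fewer than `k`
vertices leaves a connected graph. -/
def IsKConnected (k : ℕ) [Fintype V] (G : SimpleGraph V) : Prop :=
  k + 1 ≤ Fintype.card V ∧
    ∀ S : Set V, S.ncard < k → (G.induce Sᶜ).Connected

/-- Contraction of the edge `xy`: identify `y` with `x`, simplifying multiple edges. -/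
def contractE [DecidableEq V] (G : SimpleGraph V) (x y : V) :
    SimpleGraph {v : V // v ≠ y} :=
  SimpleGraph.fromRel (fun a b =>
    G.Adj a.1 b.1 ∨ (a.1 = x ∧ G.Adj y b.1) ∨ (b.1 = x ∧ G.Adj y a.1))

/-- The (outer) neighborhood of a vertex set `A`. -/
def gBoundary (G : SimpleGraph V) (A : Set V) : Set V :=
  {v | v ∉ A ∧ ∃ a ∈ A, G.Adj v a}

/-- `S` separates `G`: the rest of the graph splits into two nonempty parts
with no edges between them. -/
def Separates (G : SimpleGraph V) (S : Set V) : Prop :=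
  ∃ A B : Set V, A.Nonempty ∧ B.Nonempty ∧ Disjoint A B ∧ A ∪ B = Sᶜ ∧
    ∀ a ∈ A, ∀ b ∈ B, ¬ G.Adj a b

/-- `T` is a nontrivial 4-cut: `|T| = 4` and `G - T` splits into two parts,
each of size at least 2, with no edges between them. -/
def IsNontrivialFourCut (G : SimpleGraph V) (T : Set V) : Prop :=
  T.ncard = 4 ∧ ∃ A B : Set V, 2 ≤ A.ncard ∧ 2 ≤ B.ncard ∧ Disjoint A B ∧
    A ∪ B = Tᶜ ∧ ∀ a ∈ A, ∀ b ∈ B, ¬ G.Adj a b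

/-- `G` is quasi 5-connected: 4-connected without a nontrivial 4-cut. -/
def QuasiFiveConnected [Fintype V] (G : SimpleGraph V) : Prop :=
  IsKConnected 4 G ∧ ∀ T : Set V, ¬ IsNontrivialFourCut G T

/-- `G` is contraction critical quasi 5-connected. -/
def ContractionCriticalQuasiFive [Fintype V] [DecidableEq V] (G : SimpleGraph V) : Prop :=
  QuasiFiveConnected G ∧
    ∀ x y : V, G.Adj x y → ¬ QuasiFiveConnected (contractE G x y)

/-- `A` is a fragment of `G`: both `A` and its "far side" are nonempty and the
neighborhood of `A` is a smallest separating set. -/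
def IsFragment (G : SimpleGraph V) (A : Set V) : Prop :=
  A.Nonempty ∧ (Aᶜ \ gBoundary G A).Nonempty ∧
    ∀ S : Set V, Separates G S → (gBoundary G A).ncard ≤ S.ncard

/-- A nontrivial fragment: both sides have at least two vertices. -/
def IsNontrivialFragment (G : SimpleGraph V) (A : Set V) : Prop :=
  IsFragment G A ∧ 2 ≤ A.ncard ∧ 2 ≤ (Aᶜ \ gBoundary G A).ncard

/-- Degree sum at least 9 for every pair of vertices at distance one or two. -/
def DegSumNine (G : SimpleGraph V) : Prop :=
  ∀ u v : V, (G.dist u v = 1 ∨ G.dist u v = 2) →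
    9 ≤ (G.neighborSet u).ncard + (G.neighborSet v).ncard

/-! ### Separations of order five -/

/-- `S` is a nontrivial 5-cut of `G` with sides `A` and `B`, each of at least two vertices. -/
structure Cut (G : SimpleGraph V) (S A B : Finset V) : Prop where
  cardS : S.card = 5
  cardA : 2 ≤ A.card
  cardB : 2 ≤ B.card
  nSA : ∀ v ∈ S, v ∉ A
  nSB : ∀ v ∈ S, v ∉ B
  nAB : ∀ v ∈ A, v ∉ B
  cover : ∀ v, v ∈ S ∨ v ∈ A ∨ v ∈ B
  noadj : ∀ a ∈ A, ∀ b ∈ B, ¬ G.Adj a b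

/-- The separation form of 5-connectedness: a set `X` that cuts off part of `D` from some further
vertex has at least five elements. -/
def FiveSep (G : SimpleGraph V) : Prop :=
  ∀ D X : Finset V, (∃ d ∈ D, d ∉ X) → (∀ a ∈ D, ∀ b, G.Adj a b → b ∈ D ∨ b ∈ X) →
    (∃ z, z ∉ D ∧ z ∉ X) → 5 ≤ X.card

/-- Every edge of `G` lies in a nontrivial 5-cut. -/
def EdgeCovered (G : SimpleGraph V) : Prop :=
  ∀ x y : V, G.Adj x y → ∃ S B C : Finset V, Cut G S B C ∧ x ∈ S ∧ y ∈ S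

theorem Cut.symm {G : SimpleGraph V} {S A B : Finset V} (h : Cut G S A B) : Cut G S B A :=
  ⟨h.cardS, h.cardB, h.cardA, h.nSB, h.nSA, fun v hb ha => h.nAB v ha hb,
    fun v => by have := h.cover v; tauto, fun a ha b hb e => h.noadj b hb a ha e.symm⟩

/-- Minimality of a separating 5-set: each of its vertices has a neighbour in the part cut off. -/
theorem FiveSep.tight [DecidableEq V] {G : SimpleGraph V} (hK : FiveSep G) {D X : Finset V}
    (hD : ∃ d ∈ D, d ∉ X) (hN : ∀ a ∈ D, ∀ b, G.Adj a b → b ∈ D ∨ b ∈ X)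
    (hz : ∃ z, z ∉ D ∧ z ∉ X) (hX : X.card ≤ 5) {x : V} (hx : x ∈ X) :
    ∃ d ∈ D, G.Adj x d := by
  by_contra hcon
  push Not at hcon
  have h5 := hK D (X.erase x) ?_ ?_ ?_
  · rw [Finset.card_erase_of_mem hx] at h5
    omega
  · obtain ⟨d, hd, hdX⟩ := hD
    exact ⟨d, hd, fun h => hdX (Finset.mem_of_mem_erase h)⟩
  · intro a ha b hab
    rcases hN a ha b hab with h | h
    · exact Or.inl h
    · refine Or.inr (Finset.mem_erase.2 ⟨?_, h⟩)
      rintro rfl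
      exact hcon a ha hab.symm
  · obtain ⟨z, hz1, hz2⟩ := hz
    exact ⟨z, hz1, fun h => hz2 (Finset.mem_of_mem_erase h)⟩

theorem Cut.nb {G : SimpleGraph V} {S A B : Finset V} (h : Cut G S A B) {a b : V} (ha : a ∈ A)
    (hab : G.Adj a b) : b ∈ A ∨ b ∈ S := by
  rcases h.cover b with hb | hb | hb
  · exact Or.inr hb
  · exact Or.inl hb
  · exact (h.noadj a ha b hb hab).elim

theorem Cut.exists_memA {G : SimpleGraph V} {S A B : Finset V} (h : Cut G S A B) : ∃ a, a ∈ A :=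
  Finset.card_pos.1 (by have := h.cardA; omega)

theorem Cut.tight [DecidableEq V] {G : SimpleGraph V} (hK : FiveSep G) {S A B : Finset V}
    (h : Cut G S A B) {x : V} (hx : x ∈ S) : ∃ a ∈ A, G.Adj x a := by
  obtain ⟨a, ha⟩ := h.exists_memA
  obtain ⟨b, hb⟩ := h.symm.exists_memA
  exact hK.tight ⟨a, ha, fun hs => h.nSA a hs ha⟩ (fun a ha b hab => h.nb ha hab)
    ⟨b, fun hs => h.nAB b hs hb, fun hs => h.nSB b hs hb⟩ h.cardS.le hx

theorem Cut.card_split [DecidableEq V] {G : SimpleGraph V} {S B C : Finset V}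
    (h : Cut G S B C) (X : Finset V) :
    X.card = (X ∩ B).card + (X ∩ S).card + (X ∩ C).card := by
  rw [← Finset.card_union_of_disjoint, ← Finset.card_union_of_disjoint]
  · congr 1
    ext v
    have := h.cover v
    simp only [Finset.mem_union, Finset.mem_inter]
    tauto
  · rw [Finset.disjoint_left]
    intro v hv hv'
    have h1 := h.nSB v
    have h2 := h.nAB v
    simp only [Finset.mem_union, Finset.mem_inter] at hv hv'
    tauto
  · rw [Finset.disjoint_left]
    intro v hv hv'
    have h1 := h.nSA v
    simp only [Finset.mem_inter] at hv hv'
    tauto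

/-! ### Crossing cuts -/

/-- For crossing cuts `T` (with side `A`) and `S` (with side `B`): the part of `T ∪ S` that can be
adjacent to the corner `A ∩ B`. -/
def bd [DecidableEq V] (T A S B : Finset V) : Finset V := (T ∩ B) ∪ (T ∩ S) ∪ (A ∩ S)

theorem mem_bd [DecidableEq V] {T A S B : Finset V} {v : V} :
    v ∈ bd T A S B ↔ (v ∈ T ∧ v ∈ B) ∨ (v ∈ T ∧ v ∈ S) ∨ (v ∈ A ∧ v ∈ S) := by
  simp only [bd, Finset.mem_union, Finset.mem_inter]
  tauto

section Cross

variable [DecidableEq V] {G : SimpleGraph V} {T A A' S B C : Finset V}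

theorem card_bd (h : Cut G T A A') (k : Cut G S B C) :
    (bd T A S B).card = (T ∩ B).card + (T ∩ S).card + (A ∩ S).card := by
  rw [bd, Finset.card_union_of_disjoint, Finset.card_union_of_disjoint]
  · rw [Finset.disjoint_left]
    intro v hv hv'
    have h1 := k.nSA v
    simp only [Finset.mem_inter] at hv hv'
    tauto
  · rw [Finset.disjoint_left]
    intro v hv hv'
    have h1 := h.nSA v
    simp only [Finset.mem_inter, Finset.mem_union] at hv hv'
    tauto

theorem corner_nb (h : Cut G T A A') (k : Cut G S B C) :
    ∀ a ∈ A ∩ B, ∀ b, G.Adj a b → b ∈ A ∩ B ∨ b ∈ bd T A S B := by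
  intro a ha b hab
  rw [Finset.mem_inter] at ha
  have h1 := h.nb ha.1 hab
  have h2 := k.nb ha.2 hab
  rw [mem_bd, Finset.mem_inter]
  tauto

theorem corner_not_bd (h : Cut G T A A') (k : Cut G S B C) {v : V} (hv : v ∈ A ∩ B) :
    v ∉ bd T A S B := by
  rw [mem_bd]
  rw [Finset.mem_inter] at hv
  have h1 := h.nSA v
  have h2 := k.nSA v
  tauto

theorem far_not (h : Cut G T A A') {v : V} (hv : v ∈ A') :
    v ∉ A ∩ B ∧ v ∉ bd T A S B := by
  rw [mem_bd, Finset.mem_inter]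
  have h1 := h.nSB v
  have h2 := h.nAB v
  tauto

theorem corner_far (h : Cut G T A A') : ∃ z, z ∉ A ∩ B ∧ z ∉ bd T A S B := by
  obtain ⟨z, hz⟩ := h.symm.exists_memA
  exact ⟨z, far_not h hz⟩

theorem corner (hK : FiveSep G) (h : Cut G T A A') (k : Cut G S B C) (hne : 1 ≤ (A ∩ B).card) :
    5 ≤ (T ∩ B).card + (T ∩ S).card + (A ∩ S).card := by
  rw [← card_bd h k]
  obtain ⟨w, hw⟩ := Finset.card_pos.1 hne
  exact hK _ _ ⟨w, hw, corner_not_bd h k hw⟩ (corner_nb h k) (corner_far h)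

theorem corner_tight (hK : FiveSep G) (h : Cut G T A A') (k : Cut G S B C) {w : V}
    (hw : A ∩ B = {w}) (h5 : (T ∩ B).card + (T ∩ S).card + (A ∩ S).card ≤ 5)
    {z : V} (hz : z ∈ bd T A S B) : G.Adj w z := by
  have hwm : w ∈ A ∩ B := by simp [hw]
  obtain ⟨d, hd, hzd⟩ := hK.tight ⟨w, hwm, corner_not_bd h k hwm⟩ (corner_nb h k)
    (corner_far h) (by rw [card_bd h k]; exact h5) hz
  rw [hw, Finset.mem_singleton] at hd
  exact hd ▸ hzd.symm

/-- A corner with at least two vertices and a boundary of size five is a side of a nontrivial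
5-cut. -/
theorem corner_cut [Fintype V] (h : Cut G T A A') (k : Cut G S B C) (h2 : 2 ≤ (A ∩ B).card)
    (h5 : (T ∩ B).card + (T ∩ S).card + (A ∩ S).card = 5) :
    ∃ S' C', Cut G S' (A ∩ B) C' := by
  refine ⟨bd T A S B, Finset.univ \ (A ∩ B ∪ bd T A S B), ?_, h2, ?_, ?_, ?_, ?_, ?_, ?_⟩
  · rw [card_bd h k, h5]
  · refine h.cardB.trans (Finset.card_le_card fun v hv => ?_)
    have := far_not (B := B) (S := S) h hv
    simp only [Finset.mem_sdiff, Finset.mem_univ, Finset.mem_union]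
    tauto
  · exact fun v hv hv' => corner_not_bd h k hv' hv
  · intro v hv
    simp [hv]
  · intro v hv
    simp only [Finset.mem_sdiff, Finset.mem_univ, Finset.mem_union]
    tauto
  · intro v
    simp only [Finset.mem_sdiff, Finset.mem_univ, Finset.mem_union]
    tauto
  · intro a ha b hb hab
    have := corner_nb h k a ha b hab
    simp only [Finset.mem_sdiff, Finset.mem_univ, Finset.mem_union] at hb
    tauto

/-- The numerical relations between the nine cells of two crossing cuts. -/
theorem cells (hK : FiveSep G) (h : Cut G T A A') (k : Cut G S B C) :
    (A.card = (A ∩ B).card + (A ∩ S).card + (A ∩ C).card ∧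
     5 = (T ∩ B).card + (T ∩ S).card + (T ∩ C).card ∧
     A'.card = (A' ∩ B).card + (A' ∩ S).card + (A' ∩ C).card) ∧
    (B.card = (A ∩ B).card + (T ∩ B).card + (A' ∩ B).card ∧
     5 = (A ∩ S).card + (T ∩ S).card + (A' ∩ S).card ∧
     C.card = (A ∩ C).card + (T ∩ C).card + (A' ∩ C).card) ∧
    (1 ≤ (A ∩ B).card → 5 ≤ (T ∩ B).card + (T ∩ S).card + (A ∩ S).card) ∧
    (1 ≤ (A ∩ C).card → 5 ≤ (T ∩ C).card + (T ∩ S).card + (A ∩ S).card) ∧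
    (1 ≤ (A' ∩ B).card → 5 ≤ (T ∩ B).card + (T ∩ S).card + (A' ∩ S).card) ∧
    (1 ≤ (A' ∩ C).card → 5 ≤ (T ∩ C).card + (T ∩ S).card + (A' ∩ S).card) := by
  refine ⟨⟨k.card_split A, h.cardS ▸ k.card_split T, k.card_split A'⟩, ⟨?_, ?_, ?_⟩,
    corner hK h k, corner hK h k.symm, corner hK h.symm k, corner hK h.symm k.symm⟩
  · simpa only [Finset.inter_comm B] using h.card_split B
  · have := h.card_split S
    rw [k.cardS] at this
    simpa only [Finset.inter_comm S] using this
  · simpa only [Finset.inter_comm C] using h.card_split C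

end Cross

/-! ### A side of minimum size has two vertices -/

section Atom

variable [Fintype V] [DecidableEq V] {G : SimpleGraph V} {T A A' S B C : Finset V}

theorem min_le_corner
    (hmin : ∀ S B C : Finset V, Cut G S B C → A.card ≤ B.card)
    (h : Cut G T A A') (k : Cut G S B C) (h2 : 2 ≤ (A ∩ B).card) :
    (T ∩ B).card + (T ∩ S).card + (A ∩ S).card = 5 → A.card ≤ (A ∩ B).card := by
  intro h5
  obtain ⟨S', C', hcut⟩ := corner_cut h k h2 h5
  exact hmin _ _ _ hcut

/-- How a cut `S` meeting a side `A` of minimum size, with at least three vertices, can cross it: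
one vertex of `A` lies on one side of `S`, and at most one on the other. -/
theorem min_cross (hK : FiveSep G)
    (hmin : ∀ S B C : Finset V, Cut G S B C → A.card ≤ B.card) (h3 : 3 ≤ A.card)
    (h : Cut G T A A') (k : Cut G S B C) (hS : 1 ≤ (A ∩ S).card) :
    ((A ∩ B).card = 1 ∧ (A ∩ C).card = 1 ∧
      (T ∩ B).card + (T ∩ S).card + (A ∩ S).card = 5 ∧
      (T ∩ C).card + (T ∩ S).card + (A ∩ S).card = 5 ∧
      (A.card = 3 ∨ A.card = 4)) ∨
    (A.card = 3 ∧ (A ∩ B).card = 1 ∧ (A ∩ C).card = 0 ∧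
      (T ∩ B).card + (T ∩ S).card = 3 ∧ (T ∩ C).card = 2) ∨
    (A.card = 3 ∧ (A ∩ C).card = 1 ∧ (A ∩ B).card = 0 ∧
      (T ∩ C).card + (T ∩ S).card = 3 ∧ (T ∩ B).card = 2) := by
  obtain ⟨⟨r1, r2, -⟩, ⟨c1, c2, c3⟩, q1, q2, q3, q4⟩ := cells hK h k
  have hB := hmin _ _ _ k
  have hC := hmin _ _ _ k.symm
  have m1 := min_le_corner hmin h k
  have m2 := min_le_corner hmin h k.symm
  generalize (A ∩ B).card = ab at *
  generalize (A ∩ S).card = as at *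
  generalize (A ∩ C).card = ac at *
  generalize (T ∩ B).card = tb at *
  generalize (T ∩ S).card = ts at *
  generalize (T ∩ C).card = tc at *
  generalize (A' ∩ B).card = fb at *
  generalize (A' ∩ S).card = fs at *
  generalize (A' ∩ C).card = fc at *
  clear hmin h k hK
  -- a nonempty corner in `A` has boundary exactly five: otherwise the opposite corner is empty
  -- and the side of `S` containing it is smaller than `A`
  have e1 : 1 ≤ ab → tb + ts + as = 5 := by
    intro hab
    by_contra hne
    have : fc = 0 := by omega
    omega
  have e2 : 1 ≤ ac → tc + ts + as = 5 := by
    intro hac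
    by_contra hne
    have : fb = 0 := by omega
    omega
  have l1 : ab ≤ 1 := by
    by_contra hne
    have := m1 (by omega) (e1 (by omega))
    omega
  have l2 : ac ≤ 1 := by
    by_contra hne
    have := m2 (by omega) (e2 (by omega))
    omega
  clear m1 m2
  have g1 : as ≤ tb := by
    rcases Nat.eq_zero_or_pos fb with hf | hf
    · omega
    · have := q3 hf
      omega
  have g2 : as ≤ tc := by
    rcases Nat.eq_zero_or_pos fc with hf | hf
    · omega
    · have := q4 hf
      omega
  obtain rfl | rfl : ab = 0 ∨ ab = 1 := by omega
  · obtain rfl | rfl : ac = 0 ∨ ac = 1 := by omega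
    · omega
    · have := e2 le_rfl
      omega
  · have := e1 le_rfl
    obtain rfl | rfl : ac = 0 ∨ ac = 1 := by omega
    · omega
    · have := e2 le_rfl
      omega

/-- A vertex `w` of `A` outside the crossing cut `S` is a whole corner by `min_cross`, so it is
adjacent to all vertices of `S` that lie in `A` or `T`. -/
theorem min_outside (hK : FiveSep G)
    (hmin : ∀ S B C : Finset V, Cut G S B C → A.card ≤ B.card) (h3 : 3 ≤ A.card)
    (h : Cut G T A A') (k : Cut G S B C) (hS : 1 ≤ (A ∩ S).card) {w : V} (hw : w ∈ A)
    (hwS : w ∉ S) : ∀ z ∈ S, z ∈ A ∨ z ∈ T → G.Adj w z := by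
  have hm := min_cross hK hmin h3 h k hS
  have hT := h.cardS
  have key : ∀ {B C : Finset V}, Cut G S B C → w ∈ B → 1 = (A ∩ B).card →
      (T ∩ B).card + (T ∩ S).card + (A ∩ S).card ≤ 5 → ∀ z ∈ S, z ∈ A ∨ z ∈ T → G.Adj w z := by
    intro B C k hB h1 h5 z hz hz'
    obtain ⟨w', hw'⟩ := Finset.card_eq_one.1 h1.symm
    have : w ∈ A ∩ B := Finset.mem_inter.2 ⟨hw, hB⟩
    rw [hw', Finset.mem_singleton] at this
    subst this
    refine corner_tight hK h k hw' h5 ?_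
    rw [mem_bd]
    tauto
  have hc := k.card_split A
  rcases k.cover w with hw' | hw' | hw'
  · exact (hwS hw').elim
  · have hp : 1 ≤ (A ∩ B).card := Finset.card_pos.2 ⟨w, Finset.mem_inter.2 ⟨hw, hw'⟩⟩
    exact key k hw' (by omega) (by omega)
  · have hp : 1 ≤ (A ∩ C).card := Finset.card_pos.2 ⟨w, Finset.mem_inter.2 ⟨hw, hw'⟩⟩
    exact key k.symm hw' (by omega) (by omega)

omit [Fintype V] in
theorem exists_edge (hK : FiveSep G) (h : Cut G T A A') : ∃ x ∈ T, ∃ y ∈ A, G.Adj x y := by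
  obtain ⟨x, hx⟩ := Finset.card_pos.1 (by rw [h.cardS]; omega : 0 < T.card)
  exact ⟨x, hx, h.tight hK hx⟩

/-- A side of minimum size cannot have three or more vertices. By `min_cross` it has three or four;
four are excluded by a cut through an edge inside `A` that leaves an edge between its two sides,
three because each vertex of `A` misses two vertices of `T`, and no two of them miss the same one. -/
theorem not_min_three (hK : FiveSep G) (hE : EdgeCovered G)
    (hmin : ∀ S B C : Finset V, Cut G S B C → A.card ≤ B.card) (h3 : 3 ≤ A.card)
    (h : Cut G T A A') : False := by
  classical
  have two : ∀ {X : Finset V} {a b : V}, a ∈ X → b ∈ X → a ≠ b → 2 ≤ X.card := by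
    intro X a b ha hb hab
    exact Finset.one_lt_card.2 ⟨a, ha, b, hb, hab⟩
  -- an edge inside `A` lies in a cut containing exactly two vertices of `A`
  have inner : ∀ {y y' : V}, y ∈ A → y' ∈ A → G.Adj y y' → ∃ S B C, Cut G S B C ∧
      y ∈ S ∧ y' ∈ S ∧ (A ∩ S).card = 2 ∧ (A.card = 4 → (A ∩ B).card = 1 ∧ (A ∩ C).card = 1) ∧
      (A.card = 3 → ((T ∩ B).card = 2 ∧ (A ∩ B).card = 0) ∨
        ((T ∩ C).card = 2 ∧ (A ∩ C).card = 0)) := by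
    intro y y' hy hy' hyy
    obtain ⟨S, B, C, k, hyS, hyS'⟩ := hE y y' hyy
    have h2 : 2 ≤ (A ∩ S).card :=
      two (Finset.mem_inter.2 ⟨hy, hyS⟩) (Finset.mem_inter.2 ⟨hy', hyS'⟩) hyy.ne
    have hc := k.card_split A
    have hm := min_cross hK hmin h3 h k (by omega)
    refine ⟨S, B, C, k, hyS, hyS', ?_⟩
    omega
  obtain ⟨x, hx, y, hy, hxy⟩ := exists_edge hK h
  obtain ⟨S, B, C, k, hxS, hyS⟩ := hE x y hxy
  have hySA : y ∈ A ∩ S := Finset.mem_inter.2 ⟨hy, hyS⟩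
  have hS : 1 ≤ (A ∩ S).card := Finset.card_pos.2 ⟨y, hySA⟩
  have hm := min_cross hK hmin h3 h k hS
  have hc := k.card_split A
  have hA34 : A.card = 3 ∨ A.card = 4 := by omega
  rcases hA34 with hA | hA
  swap
  · -- four vertices: `w` and `w'` on either side of `S`, and `y`, `y'` in `S`
    obtain ⟨w, hw⟩ := Finset.card_pos.1 (by omega : 0 < (A ∩ B).card)
    obtain ⟨w', hw'⟩ := Finset.card_pos.1 (by omega : 0 < (A ∩ C).card)
    obtain ⟨y', hy', hne⟩ := Finset.exists_mem_ne (by omega : 1 < (A ∩ S).card) y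
    rw [Finset.mem_inter] at hw hw' hy'
    have hwS : w ∉ S := fun hs => k.nSA w hs hw.2
    have hwS' : w' ∉ S := fun hs => k.nSB w' hs hw'.2
    have hww : w ≠ w' := fun e => k.nAB w hw.2 (e ▸ hw'.2)
    have e1 := min_outside hK hmin h3 h k hS hw.1 hwS y hyS (Or.inl hy)
    have e2 := min_outside hK hmin h3 h k hS hw'.1 hwS' y' hy'.2 (Or.inl hy'.1)
    obtain ⟨S₁, B₁, C₁, k₁, hw1, hy1, h2, h4, -⟩ := inner hw.1 hy e1
    have hwy : w ≠ y := e1.ne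
    have out : ∀ z ∈ A, z ≠ w → z ≠ y → z ∉ S₁ := by
      intro z hz hzw hzy hzS
      have : 2 < (A ∩ S₁).card := Finset.two_lt_card.2
        ⟨z, Finset.mem_inter.2 ⟨hz, hzS⟩, w, Finset.mem_inter.2 ⟨hw.1, hw1⟩, y,
          Finset.mem_inter.2 ⟨hy, hy1⟩, hzw, hzy, hwy⟩
      omega
    have o1 := out w' hw'.1 hww.symm (fun e => hwS' (e ▸ hyS))
    have o2 := out y' hy'.1 (fun e => hwS (e ▸ hy'.2)) hne
    have h4' := h4 hA
    have nB : ¬ (w' ∈ B₁ ∧ y' ∈ B₁) := fun hh => by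
      have := two (Finset.mem_inter.2 ⟨hw'.1, hh.1⟩) (Finset.mem_inter.2 ⟨hy'.1, hh.2⟩) e2.ne
      omega
    have nC : ¬ (w' ∈ C₁ ∧ y' ∈ C₁) := fun hh => by
      have := two (Finset.mem_inter.2 ⟨hw'.1, hh.1⟩) (Finset.mem_inter.2 ⟨hy'.1, hh.2⟩) e2.ne
      omega
    rcases k₁.cover w' with d1 | d1 | d1
    · exact o1 d1
    · rcases k₁.cover y' with d2 | d2 | d2
      · exact o2 d2
      · exact nB ⟨d1, d2⟩
      · exact k₁.noadj w' d1 y' d2 e2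
    · rcases k₁.cover y' with d2 | d2 | d2
      · exact o2 d2
      · exact k₁.symm.noadj w' d1 y' d2 e2
      · exact nC ⟨d1, d2⟩
  -- three vertices: a cut that meets `A` contains exactly two of them
  have hex : ∃ w ∈ A, w ∉ S ∧ G.Adj w y := by
    rcases (by omega : 0 < (A ∩ B).card ∨ 0 < (A ∩ C).card) with hp | hp
    · obtain ⟨w, hw⟩ := Finset.card_pos.1 hp
      rw [Finset.mem_inter] at hw
      have hwS : w ∉ S := fun hs => k.nSA w hs hw.2
      exact ⟨w, hw.1, hwS, min_outside hK hmin h3 h k hS hw.1 hwS y hyS (Or.inl hy)⟩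
    · obtain ⟨w, hw⟩ := Finset.card_pos.1 hp
      rw [Finset.mem_inter] at hw
      have hwS : w ∉ S := fun hs => k.nSB w hs hw.2
      exact ⟨w, hw.1, hwS, min_outside hK hmin h3 h k hS hw.1 hwS y hyS (Or.inl hy)⟩
  obtain ⟨w, hw, -, hwy⟩ := hex
  -- from an edge `p q` in `A`, the third vertex `r` is adjacent to both and misses two of `T`
  have third : ∀ {p q r : V}, p ∈ A → q ∈ A → r ∈ A → r ≠ p → r ≠ q → G.Adj p q →
      G.Adj r p ∧ G.Adj r q ∧ 2 ≤ (T.filter fun t => ¬ G.Adj r t).card := by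
    intro p q r hp hq hr hrp hrq hpq
    obtain ⟨S₁, B₁, C₁, k₁, hp1, hq1, h2, -, h3'⟩ := inner hp hq hpq
    have hr1 : r ∉ S₁ := by
      intro hrS
      have : 2 < (A ∩ S₁).card := Finset.two_lt_card.2
        ⟨r, Finset.mem_inter.2 ⟨hr, hrS⟩, p, Finset.mem_inter.2 ⟨hp, hp1⟩, q,
          Finset.mem_inter.2 ⟨hq, hq1⟩, hrp, hrq, hpq.ne⟩
      omega
    have ha := min_outside hK hmin h3 h k₁ (by omega) hr hr1
    refine ⟨ha p hp1 (Or.inl hp), ha q hq1 (Or.inl hq), ?_⟩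
    have nomem : ∀ {X : Finset V}, (A ∩ X).card = 0 → r ∉ X := fun {X} h0 hX => by
      rw [Finset.card_eq_zero] at h0
      exact Finset.notMem_empty r (h0 ▸ Finset.mem_inter.2 ⟨hr, hX⟩)
    rcases h3' hA with ⟨t2, t0⟩ | ⟨t2, t0⟩
    · have hr' : r ∈ C₁ := by have := k₁.cover r; have := nomem t0; tauto
      rw [← t2]
      refine Finset.card_le_card fun t ht => ?_
      rw [Finset.mem_inter] at ht
      exact Finset.mem_filter.2 ⟨ht.1, k₁.symm.noadj r hr' t ht.2⟩
    · have hr' : r ∈ B₁ := by have := k₁.cover r; have := nomem t0; tauto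
      rw [← t2]
      refine Finset.card_le_card fun t ht => ?_
      rw [Finset.mem_inter] at ht
      exact Finset.mem_filter.2 ⟨ht.1, k₁.noadj r hr' t ht.2⟩
  have hz : ∃ z ∈ A, z ≠ w ∧ z ≠ y := by
    by_contra hcon
    push Not at hcon
    have : A ⊆ {w, y} := fun z hz => by
      by_cases e : z = w
      · simp [e]
      · simp [hcon z hz e]
    have := (Finset.card_le_card this).trans Finset.card_le_two
    omega
  obtain ⟨z, hz, hzw, hzy⟩ := hz
  obtain ⟨z1, z2, z3⟩ := third hw hy hz hzw hzy hwy
  obtain ⟨-, -, y3⟩ := third hw hz hy hwy.ne.symm hzy.symm z1.symm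
  obtain ⟨-, -, w3⟩ := third hy hz hw hwy.ne hzw.symm z2.symm
  -- each vertex of `T` misses at most one vertex of `A`
  have miss : ∀ t ∈ T, ∀ a ∈ A, ∀ b ∈ A, a ≠ b → ¬ G.Adj a t → ¬ G.Adj b t → False := by
    intro t ht a ha b hb hab hat hbt
    obtain ⟨g, hg, htg⟩ := h.tight hK ht
    obtain ⟨S₁, B₁, C₁, k₁, ht1, hg1⟩ := hE t g htg
    have hg1' : 1 ≤ (A ∩ S₁).card := Finset.card_pos.2 ⟨g, Finset.mem_inter.2 ⟨hg, hg1⟩⟩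
    have haS : a ∈ S₁ := by
      by_contra hn
      exact hat (min_outside hK hmin h3 h k₁ hg1' ha hn t ht1 (Or.inr ht))
    have hbS : b ∈ S₁ := by
      by_contra hn
      exact hbt (min_outside hK hmin h3 h k₁ hg1' hb hn t ht1 (Or.inr ht))
    have hga : g ≠ a := fun e => hat (e ▸ htg.symm)
    have hgb : g ≠ b := fun e => hbt (e ▸ htg.symm)
    have : 2 < (A ∩ S₁).card := Finset.two_lt_card.2
      ⟨g, Finset.mem_inter.2 ⟨hg, hg1⟩, a, Finset.mem_inter.2 ⟨ha, haS⟩, b,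
        Finset.mem_inter.2 ⟨hb, hbS⟩, hga, hgb, hab⟩
    have hm := min_cross hK hmin h3 h k₁ hg1'
    have hc := k₁.card_split A
    omega
  have dis : ∀ {a b : V}, a ∈ A → b ∈ A → a ≠ b → Disjoint
      (T.filter fun t => ¬ G.Adj a t) (T.filter fun t => ¬ G.Adj b t) := by
    intro a b ha hb hab
    rw [Finset.disjoint_left]
    intro t h1 h2
    rw [Finset.mem_filter] at h1 h2
    exact miss t h1.1 a ha b hb hab h1.2 h2.2
  -- so the three pairs missed by the vertices of `A` would be disjoint subsets of `T`
  have hle := Finset.card_le_card (Finset.union_subset (Finset.union_subset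
    (Finset.filter_subset (fun t => ¬ G.Adj w t) T) (Finset.filter_subset (fun t => ¬ G.Adj y t) T))
    (Finset.filter_subset (fun t => ¬ G.Adj z t) T))
  rw [Finset.card_union_of_disjoint (Finset.disjoint_union_left.2
    ⟨dis hw hz hzw.symm, dis hy hz hzy.symm⟩), Finset.card_union_of_disjoint
    (dis hw hy hwy.ne), h.cardS] at hle
  omega

/-- If there is a nontrivial 5-cut at all, one of them has a side with two vertices. -/
theorem exists_pair (hK : FiveSep G) (hE : EdgeCovered G) (h : Cut G T A A') :
    ∃ S B C, Cut G S B C ∧ B.card = 2 := by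
  obtain ⟨n, ⟨S, B, C, k, hn⟩, hmin⟩ :=
    WellFounded.has_min (wellFounded_lt (α := ℕ)) {n | ∃ S B C, Cut G S B C ∧ B.card = n}
      ⟨_, T, A, A', h, rfl⟩
  have hmin' : ∀ S₁ B₁ C₁ : Finset V, Cut G S₁ B₁ C₁ → B.card ≤ B₁.card := by
    intro S₁ B₁ C₁ k₁
    have := hmin _ ⟨S₁, B₁, C₁, k₁, rfl⟩
    omega
  refine ⟨S, B, C, k, ?_⟩
  by_contra hne
  have := k.cardA
  exact not_min_three hK hE hmin' (by omega) k

end Atom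

/-! ### Cuts crossing a two-vertex side -/

section Pair

variable [DecidableEq V] {G : SimpleGraph V} {T A' S B C R P Q R' P' Q' : Finset V} {u v : V}

theorem Cut.comm (h : Cut G T {u, v} A') : Cut G T {v, u} A' := by
  rwa [Finset.pair_comm]

theorem Cut.pair_nb (h : Cut G T {u, v} A') {b : V} (hb : G.Adj u b) : b = v ∨ b ∈ T := by
  have h1 := h.nb (by simp : u ∈ ({u, v} : Finset V)) hb
  simp only [Finset.mem_insert, Finset.mem_singleton] at h1
  rcases h1 with (h1 | h1) | h1
  · exact (hb.ne h1.symm).elim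
  · exact Or.inl h1
  · exact Or.inr h1

theorem Cut.pair_adj (hK : FiveSep G) (h : Cut G T {u, v} A') {t : V} (ht : t ∈ T) :
    G.Adj u t ∨ G.Adj v t := by
  obtain ⟨a, ha, hta⟩ := h.tight hK ht
  simp only [Finset.mem_insert, Finset.mem_singleton] at ha
  rcases ha with rfl | rfl
  · exact Or.inl hta.symm
  · exact Or.inr hta.symm

theorem Cut.pair_notMem (h : Cut G T {u, v} A') : u ∉ T ∧ v ∉ T :=
  ⟨fun hu => h.nSA u hu (by simp), fun hv => h.nSA v hv (by simp)⟩

theorem pair_inter (huv : u ≠ v) (X : Finset V) :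
    (({u, v} : Finset V) ∩ X).card = (if u ∈ X then 1 else 0) + (if v ∈ X then 1 else 0) := by
  by_cases hu : u ∈ X <;> by_cases hv : v ∈ X <;>
    simp [Finset.insert_inter_of_mem, Finset.insert_inter_of_notMem, hu, hv, huv]

/-- A cut containing both vertices of a two-vertex side and a vertex of its neighbourhood `T`
contains no further vertex of `T` and splits the rest of `T` evenly. -/
theorem both_mem (hK : FiveSep G) (h : Cut G T {u, v} A') (huv : u ≠ v) (k : Cut G S B C)
    (hu : u ∈ S) (hv : v ∈ S) {x : V} (hxT : x ∈ T) (hxS : x ∈ S) :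
    (T ∩ B).card = 2 ∧ (T ∩ C).card = 2 ∧ ∀ t ∈ T, t ∈ S → t = x := by
  obtain ⟨⟨-, r2, -⟩, ⟨c1, c2, c3⟩, -, -, q3, q4⟩ := cells hK h k
  rw [pair_inter huv] at c1 c2 c3
  rw [if_pos hu, if_pos hv] at c2
  rw [if_neg (k.nSA u hu), if_neg (k.nSA v hv)] at c1
  rw [if_neg (k.nSB u hu), if_neg (k.nSB v hv)] at c3
  have hB := k.cardA
  have hC := k.cardB
  have hx : x ∈ T ∩ S := Finset.mem_inter.2 ⟨hxT, hxS⟩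
  have hp : 1 ≤ (T ∩ S).card := Finset.card_pos.2 ⟨x, hx⟩
  have hb : 2 ≤ (T ∩ B).card := by
    rcases Nat.eq_zero_or_pos (A' ∩ B).card with h0 | h0
    · omega
    · have := q3 h0
      omega
  have hc : 2 ≤ (T ∩ C).card := by
    rcases Nat.eq_zero_or_pos (A' ∩ C).card with h0 | h0
    · omega
    · have := q4 h0
      omega
  refine ⟨by omega, by omega, fun t ht hts => ?_⟩
  exact Finset.card_le_one.1 (by omega : (T ∩ S).card ≤ 1) t (Finset.mem_inter.2 ⟨ht, hts⟩) x hx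

/-- A cut containing `u` but not `v`: the side without `v` contains exactly one vertex `c` of `T`,
and `c` is the only vertex of `T` not adjacent to `v`. -/
theorem one_mem (hK : FiveSep G) (h : Cut G T {u, v} A') (huv : u ≠ v) (k : Cut G S B C)
    (hu : u ∈ S) (hv : v ∈ B) :
    G.Adj v u ∧ 1 ≤ (T ∩ B).card ∧ ∃ c, T ∩ C = {c} ∧ ¬ G.Adj v c ∧
      ∀ t ∈ T, t ≠ c → G.Adj v t := by
  obtain ⟨⟨-, r2, -⟩, ⟨c1, c2, c3⟩, q1, -, q3, q4⟩ := cells hK h k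
  rw [pair_inter huv] at c1 c2 c3 q1
  have hvS : v ∉ S := fun hs => k.nSA v hs hv
  rw [pair_inter huv] at q1
  rw [if_pos hu, if_neg hvS] at c2 q1
  rw [if_neg (k.nSA u hu), if_pos hv] at c1 q1
  rw [if_neg (k.nSB u hu), if_neg (k.nAB v hv)] at c3
  have hB := k.cardA
  have hC := k.cardB
  have q1' := q1 (by omega)
  have hc1 : (T ∩ C).card = 1 := by
    rcases Nat.eq_zero_or_pos (A' ∩ C).card with h0 | h0
    · omega
    · have := q4 h0
      omega
  have hb1 : 1 ≤ (T ∩ B).card := by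
    rcases Nat.eq_zero_or_pos (A' ∩ B).card with h0 | h0
    · omega
    · have := q3 h0
      omega
  have hcor : ({u, v} : Finset V) ∩ B = {v} := by
    rw [Finset.insert_inter_of_notMem (k.nSA u hu), Finset.singleton_inter_of_mem hv]
  have hadj : ∀ z ∈ bd T {u, v} S B, G.Adj v z := fun z hz =>
    corner_tight hK h k hcor (by rw [pair_inter huv, if_pos hu, if_neg hvS]; omega) hz
  obtain ⟨c, hc⟩ := Finset.card_eq_one.1 hc1
  have hcm : c ∈ T ∩ C := by simp [hc]
  refine ⟨hadj u (mem_bd.2 (Or.inr (Or.inr ⟨by simp, hu⟩))), hb1, c, hc,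
    k.noadj v hv c (Finset.mem_inter.1 hcm).2, fun t ht htc => hadj t (mem_bd.2 ?_)⟩
  rcases k.cover t with h' | h' | h'
  · exact Or.inr (Or.inl ⟨ht, h'⟩)
  · exact Or.inl ⟨ht, h'⟩
  · have : t ∈ T ∩ C := Finset.mem_inter.2 ⟨ht, h'⟩
    rw [hc, Finset.mem_singleton] at this
    exact (htc this).elim

/-- Let two cuts contain `u` and `v`. A corner of theirs with boundary of size five and exactly one
vertex `t` of `T` equals `{t}`: otherwise `t` could replace `u` and `v` in the boundary and leave a
separator of size four. -/
theorem corner_single (hK : FiveSep G) (h : Cut G T {u, v} A') (huv : u ≠ v)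
    (k : Cut G R P Q) (k' : Cut G R' P' Q') (hu : u ∈ R) (hv : v ∈ R) (hu' : u ∈ R')
    (hv' : v ∈ R') {t : V} (ht : t ∈ P) (ht' : t ∈ P') (huniq : ∀ s ∈ T, s ∈ P → s ∈ P' → s = t)
    (h5 : (R ∩ P').card + (R ∩ R').card + (P ∩ R').card = 5) : P ∩ P' = {t} := by
  by_contra hne
  have htm : t ∈ P ∩ P' := Finset.mem_inter.2 ⟨ht, ht'⟩
  obtain ⟨d, hd⟩ : ∃ d ∈ P ∩ P', d ≠ t := by
    by_contra hcon
    push Not at hcon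
    exact hne (Finset.eq_singleton_iff_unique_mem.2 ⟨htm, hcon⟩)
  have huX : u ∈ bd R P R' P' := mem_bd.2 (Or.inr (Or.inl ⟨hu, hu'⟩))
  have hvX : v ∈ bd R P R' P' := mem_bd.2 (Or.inr (Or.inl ⟨hv, hv'⟩))
  have hle := hK ((P ∩ P').erase t) (insert t (((bd R P R' P').erase u).erase v)) ?_ ?_ ?_
  · have hc := Finset.card_insert_le t (((bd R P R' P').erase u).erase v)
    rw [Finset.card_erase_of_mem (Finset.mem_erase.2 ⟨huv.symm, hvX⟩),
      Finset.card_erase_of_mem huX, card_bd k k', h5] at hc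
    omega
  · refine ⟨d, Finset.mem_erase.2 ⟨hd.2, hd.1⟩, fun hm => ?_⟩
    have := corner_not_bd k k' hd.1
    simp only [Finset.mem_insert, Finset.mem_erase] at hm
    tauto
  · intro a ha b hab
    rw [Finset.mem_erase] at ha
    have haP := Finset.mem_inter.1 ha.2
    have hau : a ≠ u := fun e => k.nSA u hu (e ▸ haP.1)
    have hav : a ≠ v := fun e => k.nSA v hv (e ▸ haP.1)
    have haT : a ∉ T := fun hT => ha.1 (huniq a hT haP.1 haP.2)
    have hbu : b ≠ u := by
      rintro rfl
      have := h.pair_nb hab.symm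
      tauto
    have hbv : b ≠ v := by
      rintro rfl
      have := h.comm.pair_nb hab.symm
      tauto
    have := corner_nb k k' a ha.2 b hab
    simp only [Finset.mem_insert, Finset.mem_erase]
    tauto
  · obtain ⟨z, hz⟩ := k.symm.exists_memA
    have hf := far_not (S := R') (B := P') k hz
    have hzt : z ≠ t := fun e => k.nAB t ht (e ▸ hz)
    refine ⟨z, ?_, ?_⟩ <;> simp only [Finset.mem_insert, Finset.mem_erase] <;> tauto

omit [DecidableEq V] in
theorem Cut.mem_or (k : Cut G S B C) {x t : V} (hS : ∀ t ∈ T, t ∈ S → t = x) (ht : t ∈ T)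
    (hne : t ≠ x) : t ∈ B ∨ t ∈ C := by
  rcases k.cover t with h | h
  · exact (hne (hS t ht h)).elim
  · exact h

/-- First possibility for the adjacencies inside `T = {c, d, p, q, r}`: `c` and `d` have a common
neighbour `p`, which has degree at most five. -/
abbrev Shape₁ (G : SimpleGraph V) (u v c d p q r : V) : Prop :=
  G.Adj p c ∧ G.Adj p d ∧ (∃ z, ∀ b, G.Adj p b → b = c ∨ b = d ∨ b = u ∨ b = v ∨ b = z) ∧
    ¬ G.Adj c q ∧ ¬ G.Adj c r ∧ ¬ G.Adj d q ∧ ¬ G.Adj d r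

/-- Second possibility for the adjacencies inside `T = {c, d, p, q, r}`: up to the pair `c`, `d`,
the only edges are `qc` and `pd`. -/
abbrev Shape₂ (G : SimpleGraph V) (c d p q r : V) : Prop :=
  G.Adj q c ∧ G.Adj p d ∧ ¬ G.Adj c p ∧ ¬ G.Adj c r ∧ ¬ G.Adj d q ∧ ¬ G.Adj d r ∧
    ¬ G.Adj p q ∧ ¬ G.Adj p r ∧ ¬ G.Adj q r

/-- The adjacencies inside `T = {c, d, p, q, r}` when there are cuts through `u`, `v` and each of
`c` and `d`, where `T` is the neighbourhood of `{u, v}`. -/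
abbrev Shape (G : SimpleGraph V) (u v c d p q r : V) : Prop :=
  Shape₁ G u v c d p q r ∨ Shape₂ G c d p q r

/-- The two shapes correspond to the two ways in which a cut through `u, v, c` and a cut through
`u, v, d` can distribute `T`. -/
theorem shape_aux (hK : FiveSep G) (h : Cut G T {u, v} A') (huv : u ≠ v)
    (k : Cut G R P Q) (k' : Cut G R' P' Q') (hu : u ∈ R) (hv : v ∈ R) (hu' : u ∈ R')
    (hv' : v ∈ R') {c d : V} (hcd : c ≠ d) (hc : c ∈ T) (hd : d ∈ T) (hcR : c ∈ R)
    (hdR : d ∈ R') (hdP : d ∈ P) (hcP : c ∈ P') :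
    ∃ p ∈ T, ∃ q ∈ T, ∃ r ∈ T, [c, d, p, q, r].Nodup ∧
      Shape G u v c d p q r := by
  obtain ⟨hP, hQ, hRT⟩ := both_mem hK h huv k hu hv hc hcR
  obtain ⟨hP', hQ', hRT'⟩ := both_mem hK h huv k' hu' hv' hd hdR
  obtain ⟨huT, hvT⟩ := h.pair_notMem
  obtain ⟨⟨-, r2, -⟩, ⟨-, c2, -⟩, q1, q2, q3, q4⟩ := cells hK k k'
  obtain ⟨p, hp, hpd⟩ := Finset.exists_mem_ne (by omega : 1 < (T ∩ P).card) d
  rw [Finset.mem_inter] at hp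
  have hpc : p ≠ c := fun e => k.nSA c hcR (e ▸ hp.2)
  have three : ∀ {X : Finset V} {a b e : V}, X.card = 2 → a ∈ X → b ∈ X → e ∈ X → a ≠ b →
      e = a ∨ e = b := by
    intro X a b e hX ha hb he hab
    by_contra hcon
    push Not at hcon
    have := Finset.two_lt_card.2 ⟨a, ha, b, hb, e, he, hab, hcon.1.symm, hcon.2.symm⟩
    omega
  have mi : ∀ {t : V} {X : Finset V}, t ∈ T → t ∈ X → t ∈ T ∩ X :=
    fun ht hX => Finset.mem_inter.2 ⟨ht, hX⟩
  have pos : ∀ {t : V} {X Y : Finset V}, t ∈ X → t ∈ Y → 1 ≤ (X ∩ Y).card :=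
    fun h1 h2 => Finset.card_pos.2 ⟨_, Finset.mem_inter.2 ⟨h1, h2⟩⟩
  rcases k'.mem_or hRT' hp.1 hpd with hpP' | hpQ'
  · -- the cuts split `T` alike: `p` is a corner of its own
    obtain ⟨q, r, hqr, hTQ⟩ := Finset.card_eq_two.1 hQ
    have hq : q ∈ T ∩ Q := by simp [hTQ]
    have hr : r ∈ T ∩ Q := by simp [hTQ]
    rw [Finset.mem_inter] at hq hr
    have ne : ∀ {a b : V}, a ∈ P → b ∈ Q → a ≠ b := fun ha hb e => k.nAB _ ha (e ▸ hb)
    have neR : ∀ {b : V}, b ∈ Q → c ≠ b := fun hb e => k.nSB c hcR (e ▸ hb)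
    have hQQ : ∀ {t : V}, t ∈ T → t ∈ Q → t ∈ Q' := by
      intro t ht htQ
      rcases k'.mem_or hRT' ht (ne hdP htQ).symm with h' | h'
      · rcases three hP' (mi hc hcP) (mi hp.1 hpP') (mi ht h') hpc.symm with rfl | rfl
        · exact (k.nSB _ hcR htQ).elim
        · exact (k.nAB _ hp.2 htQ).elim
      · exact h'
    have s1 := q1 (pos hp.2 hpP')
    have s2 := q4 (pos hq.2 (hQQ hq.1 hq.2))
    have s5 : (R ∩ P').card + (R ∩ R').card + (P ∩ R').card = 5 := by omega
    have hs := corner_single hK h huv k k' hu hv hu' hv' hp.2 hpP' (by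
      intro s hsT hsP hsP'
      rcases three hP (mi hd hdP) (mi hp.1 hp.2) (mi hsT hsP) hpd.symm with e | e
      · exact (k'.nSA d hdR (e ▸ hsP')).elim
      · exact e) s5
    have hadj : ∀ z ∈ bd R P R' P', G.Adj p z := fun z hz =>
      corner_tight hK k k' hs s5.le hz
    have hcX : c ∈ bd R P R' P' := mem_bd.2 (Or.inl ⟨hcR, hcP⟩)
    have hdX : d ∈ bd R P R' P' := mem_bd.2 (Or.inr (Or.inr ⟨hdP, hdR⟩))
    have huX : u ∈ bd R P R' P' := mem_bd.2 (Or.inr (Or.inl ⟨hu, hu'⟩))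
    have hvX : v ∈ bd R P R' P' := mem_bd.2 (Or.inr (Or.inl ⟨hv, hv'⟩))
    refine ⟨p, hp.1, q, hq.1, r, hr.1, ?_, Or.inl ⟨hadj c hcX, hadj d hdX, ?_, ?_, ?_, ?_, ?_⟩⟩
    · have := neR hq.2
      have := neR hr.2
      have := ne hdP hq.2
      have := ne hdP hr.2
      have := ne hp.2 hq.2
      have := ne hp.2 hr.2
      simp only [List.nodup_cons, List.mem_cons, List.not_mem_nil, or_false, not_or,
        List.nodup_nil, not_false_eq_true, and_true]
      exact ⟨⟨hcd, hpc.symm, ‹_›, ‹_›⟩, ⟨hpd.symm, ‹_›, ‹_›⟩, ⟨‹_›, ‹_›⟩, hqr⟩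
    · have h4 : ({c, d, u, v} : Finset V).card = 4 := by
        have n1 : c ≠ u := fun e => huT (e ▸ hc)
        have n2 : c ≠ v := fun e => hvT (e ▸ hc)
        have n3 : d ≠ u := fun e => huT (e ▸ hd)
        have n4 : d ≠ v := fun e => hvT (e ▸ hd)
        rw [Finset.card_insert_of_notMem (by simp [hcd, n1, n2]),
          Finset.card_insert_of_notMem (by simp [n3, n4]), Finset.card_pair huv]
      have hsub : ({c, d, u, v} : Finset V) ⊆ bd R P R' P' := by
        intro t ht
        simp only [Finset.mem_insert, Finset.mem_singleton] at ht
        rcases ht with rfl | rfl | rfl | rfl <;> assumption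
      have h1 : (bd R P R' P' \ {c, d, u, v}).card = 1 := by
        rw [Finset.card_sdiff_of_subset hsub, card_bd k k', s5, h4]
      obtain ⟨z, hz⟩ := Finset.card_eq_one.1 h1
      refine ⟨z, fun b hb => ?_⟩
      have hbn := corner_nb k k' p (Finset.mem_inter.2 ⟨hp.2, hpP'⟩) b hb
      rw [hs, Finset.mem_singleton] at hbn
      have hbX : b ∈ bd R P R' P' := hbn.resolve_left hb.ne.symm
      by_cases hm : b ∈ ({c, d, u, v} : Finset V)
      · simp only [Finset.mem_insert, Finset.mem_singleton] at hm
        rcases hm with e | e | e | e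
        · exact Or.inl e
        · exact Or.inr (Or.inl e)
        · exact Or.inr (Or.inr (Or.inl e))
        · exact Or.inr (Or.inr (Or.inr (Or.inl e)))
      · have hbz := Finset.mem_sdiff.2 ⟨hbX, hm⟩
        rw [hz, Finset.mem_singleton] at hbz
        exact Or.inr (Or.inr (Or.inr (Or.inr hbz)))
    · exact k'.noadj c hcP q (hQQ hq.1 hq.2)
    · exact k'.noadj c hcP r (hQQ hr.1 hr.2)
    · exact k.noadj d hdP q hq.2
    · exact k.noadj d hdP r hr.2
  · -- the cuts split `T` differently: two opposite corners are single vertices of `T`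
    obtain ⟨q, hq, hqc⟩ := Finset.exists_mem_ne (by omega : 1 < (T ∩ P').card) c
    rw [Finset.mem_inter] at hq
    have hqd : q ≠ d := fun e => k'.nSA d hdR (e ▸ hq.2)
    have hqp : p ≠ q := fun e => k'.nAB q hq.2 (e ▸ hpQ')
    have hqQ : q ∈ Q := by
      rcases k.mem_or hRT hq.1 hqc with h' | h'
      · rcases three hP (mi hd hdP) (mi hp.1 hp.2) (mi hq.1 h') hpd.symm with e | e
        · exact (hqd e).elim
        · exact (hqp e.symm).elim
      · exact h'
    obtain ⟨r, hr, hrq⟩ := Finset.exists_mem_ne (by omega : 1 < (T ∩ Q).card) q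
    rw [Finset.mem_inter] at hr
    have hrd : r ≠ d := fun e => k.nAB d hdP (e ▸ hr.2)
    have hrp : p ≠ r := fun e => k.nAB p hp.2 (e ▸ hr.2)
    have hrc : r ≠ c := fun e => k.nSB c hcR (e ▸ hr.2)
    have hrQ' : r ∈ Q' := by
      rcases k'.mem_or hRT' hr.1 hrd with h' | h'
      · rcases three hP' (mi hc hcP) (mi hq.1 hq.2) (mi hr.1 h') hqc.symm with e | e
        · exact (hrc e).elim
        · exact (hrq e).elim
      · exact h'
    have s1 := q2 (pos hp.2 hpQ')
    have s2 := q3 (pos hqQ hq.2)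
    have s5 : (R ∩ Q').card + (R ∩ R').card + (P ∩ R').card = 5 := by omega
    have s5' : (R ∩ P').card + (R ∩ R').card + (Q ∩ R').card = 5 := by omega
    have hs := corner_single hK h huv k k'.symm hu hv hu' hv' hp.2 hpQ' (by
      intro s hsT hsP hsQ'
      rcases three hP (mi hd hdP) (mi hp.1 hp.2) (mi hsT hsP) hpd.symm with e | e
      · exact (k'.nSB d hdR (e ▸ hsQ')).elim
      · exact e) s5
    have hs' := corner_single hK h huv k.symm k' hu hv hu' hv' hqQ hq.2 (by
      intro s hsT hsQ hsP'
      rcases three hP' (mi hc hcP) (mi hq.1 hq.2) (mi hsT hsP') hqc.symm with e | e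
      · exact (k.nSB c hcR (e ▸ hsQ)).elim
      · exact e) s5'
    have a1 := corner_tight hK k k'.symm hs s5.le (mem_bd.2 (Or.inr (Or.inr ⟨hdP, hdR⟩)))
    have a2 := corner_tight hK k.symm k' hs' s5'.le (mem_bd.2 (Or.inl ⟨hcR, hcP⟩))
    refine ⟨p, hp.1, q, hq.1, r, hr.1, ?_, Or.inr ⟨a2, a1, k'.noadj c hcP p hpQ',
      k'.noadj c hcP r hrQ', k.noadj d hdP q hqQ, k.noadj d hdP r hr.2, k.noadj p hp.2 q hqQ,
      k.noadj p hp.2 r hr.2, k'.noadj q hq.2 r hrQ'⟩⟩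
    simp only [List.nodup_cons, List.mem_cons, List.not_mem_nil, or_false, not_or,
      List.nodup_nil, not_false_eq_true, and_true]
    exact ⟨⟨hcd, hpc.symm, hqc.symm, hrc.symm⟩, ⟨hpd.symm, hqd.symm, hrd.symm⟩, ⟨hqp, hrp⟩,
      hrq.symm⟩

/-- `shape_aux` without fixing the sides that contain `d` and `c`. -/
theorem shape (hK : FiveSep G) (h : Cut G T {u, v} A') (huv : u ≠ v)
    (k : Cut G R P Q) (k' : Cut G R' P' Q') (hu : u ∈ R) (hv : v ∈ R) (hu' : u ∈ R')
    (hv' : v ∈ R') {c d : V} (hcd : c ≠ d) (hc : c ∈ T) (hd : d ∈ T) (hcR : c ∈ R)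
    (hdR : d ∈ R') :
    ∃ p ∈ T, ∃ q ∈ T, ∃ r ∈ T, [c, d, p, q, r].Nodup ∧
      Shape G u v c d p q r := by
  obtain ⟨-, -, hRT⟩ := both_mem hK h huv k hu hv hc hcR
  obtain ⟨-, -, hRT'⟩ := both_mem hK h huv k' hu' hv' hd hdR
  rcases k.mem_or hRT hd hcd.symm with h1 | h1 <;> rcases k'.mem_or hRT' hc hcd with h2 | h2
  · exact shape_aux hK h huv k k' hu hv hu' hv' hcd hc hd hcR hdR h1 h2
  · exact shape_aux hK h huv k k'.symm hu hv hu' hv' hcd hc hd hcR hdR h1 h2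
  · exact shape_aux hK h huv k.symm k' hu hv hu' hv' hcd hc hd hcR hdR h1 h2
  · exact shape_aux hK h huv k.symm k'.symm hu hv hu' hv' hcd hc hd hcR hdR h1 h2

/-- The five vertices named by `Shape` exhaust `T`. -/
theorem mem_five (hT : T.card = 5) {c d p q r : V} (hc : c ∈ T) (hd : d ∈ T) (hp : p ∈ T)
    (hq : q ∈ T) (hr : r ∈ T) (hn : [c, d, p, q, r].Nodup) {t : V} (ht : t ∈ T) :
    t = c ∨ t = d ∨ t = p ∨ t = q ∨ t = r := by
  have hs : ([c, d, p, q, r].toFinset) = T := by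
    refine Finset.eq_of_subset_of_card_le ?_ ?_
    · intro x hx
      simp only [List.mem_toFinset, List.mem_cons, List.not_mem_nil, or_false] at hx
      rcases hx with rfl | rfl | rfl | rfl | rfl <;> assumption
    · rw [hT, List.toFinset_card_of_nodup hn]
      rfl
  rw [← hs] at ht
  simpa using ht

/-- Some vertex of the neighbourhood `T` of a two-vertex side `{u, v}` lies in no cut through
both `u` and `v`. Otherwise every vertex of `T` would have exactly one neighbour in `T`, which is
impossible as `|T| = 5`. -/
theorem exists_not_both (hK : FiveSep G) (h : Cut G T {u, v} A') (huv : u ≠ v) :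
    ∃ x ∈ T, ∀ S B C, Cut G S B C → u ∈ S → v ∈ S → x ∉ S := by
  by_contra hcon
  push Not at hcon
  have hT := h.cardS
  -- no vertex of `T` has two neighbours in `T`: a cut through `u`, `v` and a vertex of `T` other
  -- than these three would have them on one side, which holds only two vertices of `T`
  have maxdeg : ∀ {p q r : V}, p ∈ T → q ∈ T → r ∈ T → q ≠ r → G.Adj p q → G.Adj p r →
      False := by
    intro p q r hp hq hr hqr hpq hpr
    obtain ⟨x, hx⟩ : (T \ {p, q, r}).Nonempty := by
      refine Finset.card_pos.1 ?_
      have h1 := Finset.le_card_sdiff {p, q, r} T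
      have h2 : ({p, q, r} : Finset V).card ≤ 3 := Finset.card_le_three
      omega
    simp only [Finset.mem_sdiff, Finset.mem_insert, Finset.mem_singleton, not_or] at hx
    obtain ⟨S, B, C, k, hu, hv, hxS⟩ := hcon x hx.1
    obtain ⟨hB, hC, hS⟩ := both_mem hK h huv k hu hv hx.1 hxS
    have key : ∀ {B C : Finset V}, Cut G S B C → (T ∩ B).card = 2 → p ∈ B → False := by
      intro B C k hB hpB
      have hqB : q ∈ B := (k.mem_or hS hq (Ne.symm hx.2.2.1)).resolve_right
        (fun h' => k.noadj p hpB q h' hpq)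
      have hrB : r ∈ B := (k.mem_or hS hr (Ne.symm hx.2.2.2)).resolve_right
        (fun h' => k.noadj p hpB r h' hpr)
      have := Finset.two_lt_card.2 ⟨p, Finset.mem_inter.2 ⟨hp, hpB⟩, q,
        Finset.mem_inter.2 ⟨hq, hqB⟩, r, Finset.mem_inter.2 ⟨hr, hrB⟩, hpq.ne, hpr.ne, hqr⟩
      omega
    rcases k.mem_or hS hp (Ne.symm hx.2.1) with hside | hside
    · exact key k hB hside
    · exact key k.symm hC hside
  -- so for any two vertices of `T` the second shape occurs, and it gives both a neighbour in `T`
  have two : ∀ {c d : V}, c ∈ T → d ∈ T → c ≠ d → ∃ p ∈ T, ∃ q ∈ T, ∃ r ∈ T,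
      [c, d, p, q, r].Nodup ∧ G.Adj q c ∧ G.Adj p d := by
    intro c d hc hd hcd
    obtain ⟨R, P, Q, k, hu, hv, hcR⟩ := hcon c hc
    obtain ⟨R', P', Q', k', hu', hv', hdR⟩ := hcon d hd
    obtain ⟨p, hp, q, hq, r, hr, hn, hs | hs⟩ :=
      shape hK h huv k k' hu hv hu' hv' hcd hc hd hcR hdR
    · exact (maxdeg hp hc hd hcd hs.1 hs.2.1).elim
    · exact ⟨p, hp, q, hq, r, hr, hn, hs.1, hs.2.1⟩
  obtain ⟨c, hc, d, hd, hcd⟩ := Finset.one_lt_card.1 (by omega : 1 < T.card)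
  obtain ⟨p, hp, q, hq, r, hr, hn, hqc, hpd⟩ := two hc hd hcd
  have hn' := hn
  simp only [List.nodup_cons, List.mem_cons, List.not_mem_nil, or_false, not_or,
    List.nodup_nil, not_false_eq_true, and_true] at hn
  obtain ⟨-, -, s, hs, -, -, -, hsr, -⟩ := two hr hc (by tauto)
  rcases mem_five hT hc hd hp hq hr hn' hs with rfl | rfl | rfl | rfl | rfl
  · exact maxdeg hs hq hr hn.2.2.2 hqc.symm hsr
  · exact maxdeg hs hp hr hn.2.2.1.2 hpd.symm hsr
  · exact maxdeg hs hd hr (by tauto) hpd hsr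
  · exact maxdeg hs hc hr (by tauto) hqc hsr
  · exact hsr.ne rfl

end Pair

/-! ### The neighbourhood of a two-vertex side -/

section Structure

variable [DecidableEq V] {G : SimpleGraph V} {T A' S B C R P Q : Finset V} {u v c : V}

/-- A corner of the side `C` needs a boundary of size six: `u` lies in the boundary but has no
neighbour in the corner. -/
theorem corner_six (hK : FiveSep G) (h : Cut G T {u, v} A') (k : Cut G S B C) (m : Cut G R P Q)
    (huS : u ∈ S) (hvB : v ∈ B) (hTC : T ∩ C = {c}) (huR : u ∈ R) (hcR : c ∈ R)
    (hne : 1 ≤ (C ∩ P).card) : 6 ≤ (S ∩ P).card + (S ∩ R).card + (C ∩ R).card := by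
  have hub : u ∈ bd S C R P := mem_bd.2 (Or.inr (Or.inl ⟨huS, huR⟩))
  obtain ⟨w, hw⟩ := Finset.card_pos.1 hne
  have hle := hK (C ∩ P) ((bd S C R P).erase u) ?_ ?_ ?_
  · rw [Finset.card_erase_of_mem hub, card_bd k.symm m] at hle
    omega
  · exact ⟨w, hw, fun h' => corner_not_bd k.symm m hw (Finset.mem_of_mem_erase h')⟩
  · intro a ha b hab
    refine (corner_nb k.symm m a ha b hab).imp_right fun hb => Finset.mem_erase.2 ⟨?_, hb⟩
    rintro rfl
    rw [Finset.mem_inter] at ha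
    rcases h.pair_nb hab.symm with e | e
    · exact k.nAB v hvB (e ▸ ha.1)
    · have : a ∈ T ∩ C := Finset.mem_inter.2 ⟨e, ha.1⟩
      rw [hTC, Finset.mem_singleton] at this
      exact m.nSA c hcR (this ▸ ha.2)
  · obtain ⟨z, h1, h2⟩ := corner_far (S := R) (B := P) k.symm
    exact ⟨z, h1, fun hz => h2 (Finset.mem_of_mem_erase hz)⟩

/-- If a cut through `u` but not `v` has only the vertex `c` of `T` on the side `C` avoiding `v`,
and some cut contains `u`, `v` and `c`, then `C` has exactly two vertices. -/
theorem side_pair (hK : FiveSep G) (h : Cut G T {u, v} A') (huv : u ≠ v) (k : Cut G S B C)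
    (m : Cut G R P Q) (huS : u ∈ S) (hvB : v ∈ B) (hTB : 1 ≤ (T ∩ B).card) (hTC : T ∩ C = {c})
    (huR : u ∈ R) (hvR : v ∈ R) (hcR : c ∈ R) : C.card = 2 := by
  have hcTC : c ∈ T ∩ C := by simp [hTC]
  obtain ⟨hcT, hcC⟩ := Finset.mem_inter.1 hcTC
  obtain ⟨-, -, hRT⟩ := both_mem hK h huv m huR hvR hcT hcR
  have n1 : 1 ≤ (B ∩ R).card := Finset.card_pos.2 ⟨v, Finset.mem_inter.2 ⟨hvB, hvR⟩⟩
  have n2 : 1 ≤ (S ∩ R).card := Finset.card_pos.2 ⟨u, Finset.mem_inter.2 ⟨huS, huR⟩⟩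
  have n3 : 1 ≤ (C ∩ R).card := Finset.card_pos.2 ⟨c, Finset.mem_inter.2 ⟨hcC, hcR⟩⟩
  have s1 := corner_six hK h k m huS hvB hTC huR hcR
  have s2 := corner_six hK h k m.symm huS hvB hTC huR hcR
  obtain ⟨t, ht⟩ := Finset.card_pos.1 hTB
  rw [Finset.mem_inter] at ht
  have htP : 1 ≤ (B ∩ P).card ∨ 1 ≤ (B ∩ Q).card := by
    rcases m.mem_or hRT ht.1 (fun e => k.nAB t ht.2 (e ▸ hcC)) with h' | h'
    · exact Or.inl (Finset.card_pos.2 ⟨t, Finset.mem_inter.2 ⟨ht.2, h'⟩⟩)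
    · exact Or.inr (Finset.card_pos.2 ⟨t, Finset.mem_inter.2 ⟨ht.2, h'⟩⟩)
  have hP := m.cardA
  have hQ := m.cardB
  have hC := k.cardB
  obtain ⟨⟨-, r2, r3⟩, ⟨c1, c2, c3⟩, q1, q2, -, -⟩ := cells hK k m
  rcases htP with h1 | h1
  · have := q1 h1
    have hCQ : (C ∩ Q).card = 0 := by
      by_contra h0
      have := s2 (by omega)
      omega
    have hCP : (C ∩ P).card = 0 := by
      by_contra h0
      have := s1 (by omega)
      have : (B ∩ Q).card = 0 := by
        by_contra h0
        have := q2 (by omega)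
        omega
      omega
    by_contra h3
    have : 1 ≤ (B ∩ Q).card := by omega
    have := q2 this
    omega
  · have := q2 h1
    have hCP : (C ∩ P).card = 0 := by
      by_contra h0
      have := s1 (by omega)
      omega
    have hCQ : (C ∩ Q).card = 0 := by
      by_contra h0
      have := s2 (by omega)
      have : (B ∩ P).card = 0 := by
        by_contra h0
        have := q1 (by omega)
        omega
      omega
    by_contra h3
    have : 1 ≤ (B ∩ P).card := by omega
    have := q1 this
    omega

/-- A further cut with a two-vertex side `{c, e}` whose cut set contains `u` and `x`, where `e` is
not in the closed neighbourhood of the side `{u, v}`. -/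
def Next (G : SimpleGraph V) (T : Finset V) (u v c x : V) : Prop :=
  ∃ e S B, Cut G S {c, e} B ∧ e ∉ T ∧ e ≠ u ∧ e ≠ v ∧ e ≠ c ∧ u ∈ S ∧ x ∈ S

/-- Starting from a vertex `x` of `T` adjacent to `u` that is in no cut with both `u` and `v`:
`v` is adjacent to all of `T` except one vertex `c`. -/
theorem half (hK : FiveSep G) (hE : EdgeCovered G) (h : Cut G T {u, v} A') (huv : u ≠ v) {x : V}
    (hx : ∀ S B C, Cut G S B C → u ∈ S → v ∈ S → x ∉ S) (hux : G.Adj u x) :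
    ∃ c ∈ T, G.Adj v u ∧ x ≠ c ∧ ¬ G.Adj v c ∧ (∀ t ∈ T, t ≠ c → G.Adj v t) ∧
      (∃ R P Q, Cut G R P Q ∧ u ∈ R ∧ v ∈ R ∧ c ∈ R) ∧ Next G T u v c x := by
  -- it is enough to treat the case that `v` is on the first side
  have key : ∀ {S B C : Finset V}, Cut G S B C → u ∈ S → x ∈ S → v ∈ B →
      ∃ c ∈ T, G.Adj v u ∧ x ≠ c ∧ ¬ G.Adj v c ∧ (∀ t ∈ T, t ≠ c → G.Adj v t) ∧
        (∃ R P Q, Cut G R P Q ∧ u ∈ R ∧ v ∈ R ∧ c ∈ R) ∧ Next G T u v c x := by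
    intro S B C k huS hxS hvB
    obtain ⟨hvu, hTB, c, hTC, hvc, hall⟩ := one_mem hK h huv k huS hvB
    have hcTC : c ∈ T ∩ C := by simp [hTC]
    obtain ⟨hcT, hcC⟩ := Finset.mem_inter.1 hcTC
    have hxc : x ≠ c := fun e => k.nSB x hxS (e ▸ hcC)
    have huc : G.Adj u c := (h.pair_adj hK hcT).resolve_right hvc
    have hR : ∃ R P Q, Cut G R P Q ∧ u ∈ R ∧ v ∈ R ∧ c ∈ R := by
      have no : ∀ {R P Q : Finset V}, Cut G R P Q → u ∈ R → c ∈ R → v ∈ P → False := by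
        intro R P Q m huR hcR hvP
        obtain ⟨-, -, c', hc', -, hall'⟩ := one_mem hK h huv m huR hvP
        by_cases e : c = c'
        · have : c' ∈ T ∩ Q := by simp [hc']
          exact m.nSB c hcR (e ▸ (Finset.mem_inter.1 this).2)
        · exact hvc (hall' c hcT e)
      obtain ⟨R, P, Q, m, huR, hcR⟩ := hE u c huc
      refine ⟨R, P, Q, m, huR, ?_, hcR⟩
      rcases m.cover v with h' | h' | h'
      · exact h'
      · exact (no m huR hcR h').elim
      · exact (no m.symm huR hcR h').elim
    refine ⟨c, hcT, hvu, hxc, hvc, hall, hR, ?_⟩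
    obtain ⟨R, P, Q, m, huR, hvR, hcR⟩ := hR
    have hC := side_pair hK h huv k m huS hvB hTB hTC huR hvR hcR
    obtain ⟨e, he, hec⟩ := Finset.exists_mem_ne (by omega : 1 < C.card) c
    have hCe : C = {c, e} := by
      symm
      refine Finset.eq_of_subset_of_card_le ?_ ?_
      · intro y hy
        simp only [Finset.mem_insert, Finset.mem_singleton] at hy
        rcases hy with rfl | rfl <;> assumption
      · rw [hC, Finset.card_pair hec.symm]
    refine ⟨e, S, B, hCe ▸ k.symm, ?_, ?_, ?_, hec, huS, hxS⟩
    · intro heT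
      have : e ∈ T ∩ C := Finset.mem_inter.2 ⟨heT, he⟩
      rw [hTC, Finset.mem_singleton] at this
      exact hec this
    · exact fun e' => k.nSB u huS (e' ▸ he)
    · exact fun e' => k.nAB v hvB (e' ▸ he)
  obtain ⟨S, B, C, k, huS, hxS⟩ := hE u x hux
  rcases k.cover v with hside | hside | hside
  · exact (hx S B C k huS hside hxS).elim
  · exact key k huS hxS hside
  · exact key k.symm huS hxS hside

/-- The graph around a two-vertex side `{u, v}` with neighbourhood `T = {c, d, p, q, r}`: the
vertices `u` and `v` are adjacent, `u` misses exactly `d` and `v` misses exactly `c`. -/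
structure Nbhd (G : SimpleGraph V) (T : Finset V) (u v c d p q r : V) : Prop where
  mem : ∀ t, t ∈ T ↔ t = c ∨ t = d ∨ t = p ∨ t = q ∨ t = r
  nodup : [c, d, p, q, r].Nodup
  nu : ∀ b, G.Adj u b ↔ b = v ∨ b = c ∨ b = p ∨ b = q ∨ b = r
  nv : ∀ b, G.Adj v b ↔ b = u ∨ b = d ∨ b = p ∨ b = q ∨ b = r
  uT : u ∉ T
  vT : v ∉ T
  shape : Shape G u v c d p q r

/-- Every two-vertex side has the structure `Nbhd`, and two further two-vertex sides `{c, e}` and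
`{d, e'}` arise next to it. -/
theorem exists_nbhd (hK : FiveSep G) (hE : EdgeCovered G) (h : Cut G T {u, v} A')
    (huv : u ≠ v) : ∃ c d p q r x, Nbhd G T u v c d p q r ∧ (x = p ∨ x = q ∨ x = r) ∧
      Next G T u v c x ∧ Next G T v u d x := by
  have key : ∀ {u v : V}, Cut G T {u, v} A' → u ≠ v → ∀ x ∈ T, G.Adj u x →
      (∀ S B C, Cut G S B C → u ∈ S → v ∈ S → x ∉ S) →
      ∃ c d p q r x, Nbhd G T u v c d p q r ∧ (x = p ∨ x = q ∨ x = r) ∧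
        Next G T u v c x ∧ Next G T v u d x := by
    intro u v h huv x hxT hux hx
    obtain ⟨c, hcT, hvu, hxc, hvc, hallv, ⟨R, P, Q, m, huR, hvR, hcR⟩, next⟩ :=
      half hK hE h huv hx hux
    obtain ⟨d, hdT, -, hxd, hud, hallu, ⟨R', P', Q', m', hvR', huR', hdR'⟩, next'⟩ :=
      half hK hE h.comm huv.symm (fun S B C k hv hu => hx S B C k hu hv)
        (hallv x hxT hxc)
    have hcd : c ≠ d := by
      rintro rfl
      rcases h.pair_adj hK hcT with h' | h'
      · exact hud h'
      · exact hvc h'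
    obtain ⟨p, hp, q, hq, r, hr, hn, hs⟩ :=
      shape hK h huv m m' huR hvR huR' hvR' hcd hcT hdT hcR hdR'
    have h5 : ∀ t ∈ T, _ := fun t => mem_five h.cardS hcT hdT hp hq hr hn
    have hn' := hn
    simp only [List.nodup_cons, List.mem_cons, List.not_mem_nil, or_false, not_or,
      List.nodup_nil, not_false_eq_true, and_true] at hn'
    obtain ⟨⟨-, cp, cq, cr⟩, ⟨dp, dq, dr⟩, -⟩ := hn'
    refine ⟨c, d, p, q, r, x, ⟨fun t => ⟨h5 t, ?_⟩, hn, fun b => ⟨fun hb => ?_, ?_⟩,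
      fun b => ⟨fun hb => ?_, ?_⟩, h.pair_notMem.1, h.pair_notMem.2, hs⟩, ?_, next, next'⟩
    · rintro (rfl | rfl | rfl | rfl | rfl) <;> assumption
    · rcases h.pair_nb hb with e | e
      · exact Or.inl e
      · rcases h5 b e with e | e | e
        · exact Or.inr (Or.inl e)
        · exact (hud (e ▸ hb)).elim
        · exact Or.inr (Or.inr e)
    · rintro (rfl | rfl | rfl | rfl | rfl)
      · exact hvu.symm
      · exact hallu _ hcT hcd
      · exact hallu _ hp (Ne.symm dp)
      · exact hallu _ hq (Ne.symm dq)
      · exact hallu _ hr (Ne.symm dr)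
    · rcases h.comm.pair_nb hb with e | e
      · exact Or.inl e
      · rcases h5 b e with e | e | e
        · exact (hvc (e ▸ hb)).elim
        · exact Or.inr (Or.inl e)
        · exact Or.inr (Or.inr e)
    · rintro (rfl | rfl | rfl | rfl | rfl)
      · exact hvu
      · exact hallv _ hdT hcd.symm
      · exact hallv _ hp (Ne.symm cp)
      · exact hallv _ hq (Ne.symm cq)
      · exact hallv _ hr (Ne.symm cr)
    · rcases h5 x hxT with e | e | e
      · exact (hxc e).elim
      · exact (hxd e).elim
      · exact e
  obtain ⟨x, hxT, hx⟩ := exists_not_both hK h huv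
  rcases h.pair_adj hK hxT with hux | hvx
  · exact key h huv x hxT hux hx
  · obtain ⟨c, hcT, -, hxc, -, hall, -⟩ :=
      half hK hE h.comm huv.symm (fun S B C k hv hu => hx S B C k hu hv) hvx
    exact key h huv x hxT (hall x hxT hxc) hx

end Structure

/-! ### No cut with a two-vertex side -/

section Nbhd

variable {G : SimpleGraph V} {T : Finset V} {u v c d p q r : V}

theorem Nbhd.ne (n : Nbhd G T u v c d p q r) :
    c ≠ d ∧ c ≠ p ∧ c ≠ q ∧ c ≠ r ∧ d ≠ p ∧ d ≠ q ∧ d ≠ r ∧ p ≠ q ∧ p ≠ r ∧ q ≠ r := by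
  have hn := n.nodup
  simp only [List.nodup_cons, List.mem_cons, List.not_mem_nil, or_false, not_or,
    List.nodup_nil, not_false_eq_true, and_true] at hn
  obtain ⟨⟨h1, h2, h3, h4⟩, ⟨h5, h6, h7⟩, ⟨h8, h9⟩, h10⟩ := hn
  exact ⟨h1, h2, h3, h4, h5, h6, h7, h8, h9, h10⟩

/-- The vertex of `T` missed by `v` is the only one. -/
theorem Nbhd.eq_of_not_adj (n : Nbhd G T u v c d p q r) {t : V} (ht : t ∈ T)
    (hvt : ¬ G.Adj v t) : t = c :=
  ((n.mem t).1 ht).resolve_right fun e => hvt ((n.nv t).2 (Or.inr e))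

theorem Nbhd.eq_of_not_adj' (n : Nbhd G T u v c d p q r) {t : V} (ht : t ∈ T)
    (hut : ¬ G.Adj u t) : t = d := by
  rcases (n.mem t).1 ht with e | e | e
  · exact (hut ((n.nu t).2 (Or.inr (Or.inl e)))).elim
  · exact e
  · exact (hut ((n.nu t).2 (Or.inr (Or.inr e)))).elim

theorem Nbhd.adj_v_iff (n : Nbhd G T u v c d p q r) (b : V) :
    G.Adj v b ↔ b = u ∨ (b ∈ T ∧ b ≠ c) := by
  obtain ⟨h1, h2, h3, h4, -⟩ := n.ne
  rw [n.nv, n.mem]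
  constructor
  · rintro (e | e | e | e | e)
    · exact Or.inl e
    · exact Or.inr ⟨Or.inr (Or.inl e), fun h => h1 (h.symm.trans e)⟩
    · exact Or.inr ⟨Or.inr (Or.inr (Or.inl e)), fun h => h2 (h.symm.trans e)⟩
    · exact Or.inr ⟨Or.inr (Or.inr (Or.inr (Or.inl e))), fun h => h3 (h.symm.trans e)⟩
    · exact Or.inr ⟨Or.inr (Or.inr (Or.inr (Or.inr e))), fun h => h4 (h.symm.trans e)⟩
  · rintro (e | ⟨e, hc⟩)
    · exact Or.inl e
    · exact Or.inr (e.resolve_left hc)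

theorem Nbhd.adj_u (n : Nbhd G T u v c d p q r) {b : V} (hb : G.Adj u b) : b = v ∨ b ∈ T := by
  rcases (n.nu b).1 hb with e | e | e
  · exact Or.inl e
  · exact Or.inr ((n.mem b).2 (Or.inl e))
  · exact Or.inr ((n.mem b).2 (Or.inr (Or.inr e)))

end Nbhd

section Final

variable [DecidableEq V] {G : SimpleGraph V} {T A' S B C R P Q : Finset V}
  {u v c d p q r x e : V}

/-- If `p` is the only common neighbour of `u` and `c`, it is also adjacent to the second vertex
`e` of the next two-vertex side `{c, e}`. -/
theorem first_next (hK : FiveSep G) (hE : EdgeCovered G)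
    (hue : ∀ b, G.Adj u b → b = v ∨ b ∈ T) (hN : ∀ b, G.Adj u b → G.Adj c b → b = p)
    (hnext : Next G T u v c x) :
    ∃ (e : V) (S : Finset V), e ∉ T ∧ e ≠ u ∧ e ≠ v ∧ e ≠ c ∧ G.Adj p e ∧ S.card = 5 ∧ u ∈ S ∧ c ∉ S ∧
      (∀ b, G.Adj c b → b = e ∨ b ∈ S) ∧ (∀ b, G.Adj e b ↔ b = c ∨ (b ∈ S ∧ b ≠ u)) ∧
      ∃ m, ∀ t ∈ S, t ≠ m → G.Adj c t := by
  obtain ⟨e, S, B, k, heT, heu, hev, hec, huS, -⟩ := hnext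
  obtain ⟨c', d', p', q', r', -, n, -⟩ := exists_nbhd hK hE k hec.symm
  have hue' : ¬ G.Adj e u := fun h => (hue e h.symm).elim hev heT
  obtain rfl := n.eq_of_not_adj huS hue'
  have hp : ∃ y, G.Adj y u ∧ G.Adj c y ∧ G.Adj e y := by
    rcases n.shape with hs | hs
    · exact ⟨p', hs.1, (n.nu _).2 (by simp), (n.nv _).2 (by simp)⟩
    · exact ⟨q', hs.1, (n.nu _).2 (by simp), (n.nv _).2 (by simp)⟩
  obtain ⟨y, hyu, hcy, hey⟩ := hp
  obtain rfl := hN y hyu.symm hcy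
  refine ⟨e, S, heT, heu, hev, hec, hey.symm, k.cardS, huS, n.uT, fun b hb => n.adj_u hb,
    n.adj_v_iff, d', fun t ht htd => ?_⟩
  by_contra h
  exact htd (n.eq_of_not_adj' ht h)

/-- The first shape is impossible: `{c, d, e, p}` would be separated by `u`, `v` and two further
vertices. -/
theorem not_first (hK : FiveSep G) (hE : EdgeCovered G) (n : Nbhd G T u v c d p q r)
    (h1 : Next G T u v c x) (h2 : Next G T v u d x) : ¬ Shape₁ G u v c d p q r := by
  rintro ⟨hpc, hpd, ⟨z, hz⟩, cq, cr, dq, dr⟩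
  obtain ⟨ncd, ncp, ncq, ncr, ndp, ndq, ndr, npq, npr, nqr⟩ := n.ne
  have hcv : ¬ G.Adj c v := fun h => ((n.adj_v_iff c).1 h.symm).elim
    (fun e => n.uT (e ▸ (n.mem c).2 (by simp))) (fun e => e.2 rfl)
  have hmem : ∀ {t : V}, t = c ∨ t = d ∨ t = p ∨ t = q ∨ t = r → t ∈ T := fun {t} => (n.mem t).2
  have hdu : ¬ G.Adj d u := by
    intro h
    rcases (n.nu d).1 h.symm with e | e | e | e | e
    · exact n.vT (e ▸ hmem (by simp))
    · exact ncd e.symm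
    · exact ndp e
    · exact ndq e
    · exact ndr e
  obtain ⟨e, S, heT, heu, hev, -, hpe, hS, huS, hcS, hNc, hNe, m, hm⟩ := first_next (p := p) hK hE
    (fun b hb => n.adj_u hb) (by
      intro b hub hcb
      rcases (n.nu b).1 hub with e | e | e | e | e
      · exact (hcv (e ▸ hcb)).elim
      · exact (hcb.ne e.symm).elim
      · exact e
      · exact (cq (e ▸ hcb)).elim
      · exact (cr (e ▸ hcb)).elim) h1
  obtain ⟨e', S', heT', heu', hev', -, hpe', -, hvS', -, hNd, hNe', -⟩ :=
    first_next (p := p) hK hE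
    (fun b hb => ((n.adj_v_iff b).1 hb).imp_right And.left) (by
      intro b hvb hdb
      rcases (n.nv b).1 hvb with e | e | e | e | e
      · exact (hdu (e ▸ hdb)).elim
      · exact (hdb.ne e.symm).elim
      · exact e
      · exact (dq (e ▸ hdb)).elim
      · exact (dr (e ▸ hdb)).elim) h2
  have ez : ∀ {e : V}, e ∉ T → e ≠ u → e ≠ v → G.Adj p e → e = z := by
    intro e heT heu hev hpe
    rcases hz e hpe with h | h | h | h | h
    · exact (heT (hmem (Or.inl h))).elim
    · exact (heT (hmem (Or.inr (Or.inl h)))).elim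
    · exact (heu h).elim
    · exact (hev h).elim
    · exact h
  obtain rfl := ez heT heu hev hpe
  obtain rfl := ez heT' hev' heu' hpe'
  have hdS : d ∈ S ∧ d ≠ u := ((hNe d).1 ((hNe' d).2 (Or.inl rfl))).resolve_left ncd.symm
  have hpS : p ∈ S ∧ p ≠ u := ((hNe p).1 hpe.symm).resolve_left ncp.symm
  have hY : (((S.erase u).erase d).erase p).card = 2 := by
    rw [Finset.card_erase_of_mem, Finset.card_erase_of_mem, Finset.card_erase_of_mem huS, hS]
    · exact Finset.mem_erase.2 ⟨hdS.2, hdS.1⟩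
    · exact Finset.mem_erase.2 ⟨ndp.symm, Finset.mem_erase.2 ⟨hpS.2, hpS.1⟩⟩
  have hX : ∀ b, b ∈ insert u (insert v (((S.erase u).erase d).erase p)) ↔
      b = u ∨ b = v ∨ (b ≠ p ∧ b ≠ d ∧ b ≠ u ∧ b ∈ S) := by
    intro b
    simp only [Finset.mem_insert, Finset.mem_erase]
  have hle := hK {c, d, e', p} (insert u (insert v (((S.erase u).erase d).erase p))) ?_ ?_ ?_
  · have a1 := Finset.card_insert_le v (((S.erase u).erase d).erase p)
    have a2 := Finset.card_insert_le u (insert v (((S.erase u).erase d).erase p))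
    omega
  · refine ⟨c, by simp, fun h => ?_⟩
    rcases (hX c).1 h with h | h | h
    · exact n.uT (h ▸ hmem (Or.inl rfl))
    · exact n.vT (h ▸ hmem (Or.inl rfl))
    · exact hcS h.2.2.2
  · intro a ha b hab
    rw [hX]
    simp only [Finset.mem_insert, Finset.mem_singleton] at ha ⊢
    -- every vertex of `S` is in `D ∪ X`
    have inS : b ∈ S → (b = c ∨ b = d ∨ b = e' ∨ b = p) ∨
        b = u ∨ b = v ∨ (b ≠ p ∧ b ≠ d ∧ b ≠ u ∧ b ∈ S) := by
      intro hb
      by_cases b1 : b = p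
      · simp [b1]
      by_cases b2 : b = d
      · simp [b2]
      by_cases b3 : b = u
      · simp [b3]
      exact Or.inr (Or.inr (Or.inr ⟨b1, b2, b3, hb⟩))
    have inE : G.Adj e' b → (b = c ∨ b = d ∨ b = e' ∨ b = p) ∨
        b = u ∨ b = v ∨ (b ≠ p ∧ b ≠ d ∧ b ≠ u ∧ b ∈ S) := fun hb =>
      ((hNe b).1 hb).elim (fun h => Or.inl (Or.inl h)) (fun h => inS h.1)
    rcases ha with rfl | rfl | rfl | rfl
    · rcases hNc b hab with h | h
      · simp [h]
      · exact inS h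
    · rcases hNd b hab with h | h
      · simp [h]
      · by_cases hbv : b = v
        · simp [hbv]
        · exact inE ((hNe' b).2 (Or.inr ⟨h, hbv⟩))
    · exact inE hab
    · rcases hz b hab with h | h | h | h | h <;> simp [h]
  · have out : ∀ {t : V}, t ∈ T → t ≠ c → t ≠ d → t ≠ p → t ∉ S → ∃ z,
        z ∉ ({c, d, e', p} : Finset V) ∧
        z ∉ insert u (insert v (((S.erase u).erase d).erase p)) := by
      intro t ht tc td tp htS
      refine ⟨t, ?_, fun h => ?_⟩
      · simp only [Finset.mem_insert, Finset.mem_singleton, not_or]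
        exact ⟨tc, td, fun h => heT (h ▸ ht), tp⟩
      · rcases (hX t).1 h with h | h | h
        · exact n.uT (h ▸ ht)
        · exact n.vT (h ▸ ht)
        · exact htS h.2.2.2
    by_cases hq : q ∈ S
    · refine out (t := r) (hmem (by simp)) ncr.symm ndr.symm npr.symm fun hr => ?_
      by_cases e1 : q = m
      · exact cr (hm r hr fun e2 => nqr (e1.trans e2.symm))
      · exact cq (hm q hq e1)
    · exact out (hmem (by simp)) ncq.symm ndq.symm npq.symm hq

/-- The second shape, when `x` is not adjacent to `c`. The next side `{c, e}` leads to a side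
`{x, g}` in whose neighbourhood three pairwise nonadjacent common neighbours of `x` and `g` exist.
As `u` and `v` are adjacent neighbours of `x`, one of them is `g`, but it has too few common
neighbours with `x`. -/
theorem second_aux (hK : FiveSep G) (hE : EdgeCovered G)
    (hue : ∀ b, G.Adj u b → b = v ∨ b ∈ T) (huv : G.Adj u v) (hxu : G.Adj x u)
    (hxv : G.Adj x v) (hxc : ¬ G.Adj c x) (hu : ∀ b, G.Adj u b → G.Adj x b → b = v)
    (hv : ∀ b, G.Adj v b → G.Adj x b → b = u ∨ b = d) (hnext : Next G T u v c x) : False := by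
  obtain ⟨e, S, B, k, heT, heu, hev, hec, huS, hxS⟩ := hnext
  obtain ⟨c', d', p', q', r', x', n, -, -, hnext'⟩ := exists_nbhd hK hE k hec.symm
  have hue' : ¬ G.Adj e u := fun h => (hue e h.symm).elim hev heT
  obtain rfl := n.eq_of_not_adj huS hue'
  obtain rfl := n.eq_of_not_adj' hxS hxc
  obtain ⟨g, S', B', k', hgS, hge, hgc, hgx, heS', -⟩ := hnext'
  obtain ⟨c₂, d₂, p₂, q₂, r₂, x₂, n₂, -, h1, h2⟩ := exists_nbhd hK hE k' hgx.symm
  have heg : ¬ G.Adj g e := fun h => ((n.adj_v_iff g).1 h.symm).elim hgc (fun h => hgS h.1)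
  obtain rfl := n₂.eq_of_not_adj heS' heg
  obtain ⟨-, -, -, -, -, -, pq, pr, qr⟩ :=
    n₂.shape.resolve_left (not_first hK hE n₂ h1 h2)
  obtain ⟨-, -, -, -, -, -, -, npq, npr, nqr⟩ := n₂.ne
  -- `u` and `v` are adjacent neighbours of `x`, so they are not both common neighbours
  have hg : g = u ∨ g = v := by
    rcases (n₂.nu u).1 hxu with h | h | h | h | h <;>
      rcases (n₂.nu v).1 hxv with h' | h' | h' | h' | h' <;>
      first
      | exact Or.inl h.symm
      | exact Or.inr h'.symm
      | exact (heu h.symm).elim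
      | exact (hev h'.symm).elim
      | exact (huv.ne (h.trans h'.symm)).elim
      | exact (pq (by rw [← h, ← h']; exact huv)).elim
      | exact (pr (by rw [← h, ← h']; exact huv)).elim
      | exact (qr (by rw [← h, ← h']; exact huv)).elim
      | exact (pq (by rw [← h, ← h']; exact huv.symm)).elim
      | exact (pr (by rw [← h, ← h']; exact huv.symm)).elim
      | exact (qr (by rw [← h, ← h']; exact huv.symm)).elim
  have xp := (n₂.nu p₂).2 (by simp)
  have xq := (n₂.nu q₂).2 (by simp)
  have xr := (n₂.nu r₂).2 (by simp)
  have gp := (n₂.nv p₂).2 (by simp)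
  have gq := (n₂.nv q₂).2 (by simp)
  have gr := (n₂.nv r₂).2 (by simp)
  rcases hg with rfl | rfl
  · exact npq ((hu _ gp xp).trans (hu _ gq xq).symm)
  · rcases hv _ gp xp with h | h <;> rcases hv _ gq xq with h' | h' <;>
      rcases hv _ gr xr with h'' | h'' <;>
      first
      | exact npq (h.trans h'.symm)
      | exact npr (h.trans h''.symm)
      | exact nqr (h'.trans h''.symm)

/-- If every edge lies in a nontrivial 5-cut, no 5-cut has a side with two vertices. -/
theorem no_pair (hK : FiveSep G) (hE : EdgeCovered G) (h : Cut G T {u, v} A')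
    (huv : u ≠ v) : False := by
  obtain ⟨c, d, p, q, r, x, n, hx, h1, h2⟩ := exists_nbhd hK hE h huv
  obtain ⟨-, -, cp, cr, dq, dr, pq, pr, qr⟩ := n.shape.resolve_left (not_first hK hE n h1 h2)
  have auv : G.Adj u v := (n.nu v).2 (Or.inl rfl)
  have ind : ∀ b, b = p ∨ b = q ∨ b = r → ¬ G.Adj x b := by
    rintro b (rfl | rfl | rfl) hb <;> rcases hx with rfl | rfl | rfl <;>
      first
      | exact hb.ne rfl
      | exact pq hb
      | exact pq hb.symm
      | exact pr hb
      | exact pr hb.symm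
      | exact qr hb
      | exact qr hb.symm
  have hux : G.Adj u x := (n.nu x).2 (Or.inr (Or.inr hx))
  have hvx : G.Adj v x := (n.nv x).2 (Or.inr (Or.inr hx))
  have hu : ∀ b, G.Adj u b → G.Adj x b → b = v ∨ b = c := by
    intro b hb hxb
    rcases (n.nu b).1 hb with e | e | e
    · exact Or.inl e
    · exact Or.inr e
    · exact (ind b e hxb).elim
  have hv : ∀ b, G.Adj v b → G.Adj x b → b = u ∨ b = d := by
    intro b hb hxb
    rcases (n.nv b).1 hb with e | e | e
    · exact Or.inl e
    · exact Or.inr e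
    · exact (ind b e hxb).elim
  have hcd : ¬ G.Adj c x ∨ ¬ G.Adj d x := by
    rcases hx with rfl | rfl | rfl
    · exact Or.inl cp
    · exact Or.inr dq
    · exact Or.inl cr
  rcases hcd with hcx | hdx
  · refine second_aux hK hE (fun b hb => n.adj_u hb) auv hux.symm hvx.symm hcx ?_ hv h1
    exact fun b hb hxb => (hu b hb hxb).resolve_right fun e => hcx (e ▸ hxb.symm)
  · refine second_aux hK hE (fun b hb => ((n.adj_v_iff b).1 hb).imp_right And.left) auv.symm
      hvx.symm hux.symm hdx ?_ hu h2
    exact fun b hb hxb => (hv b hb hxb).resolve_right fun e => hdx (e ▸ hxb.symm)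

end Final

/-! ### Contractions and cuts -/

section Contraction

theorem reachable_closed {W : Type*} {H : SimpleGraph W} {P : W → Prop}
    (hP : ∀ a b, H.Adj a b → P a → P b) {a b : W} (h : H.Reachable a b) (ha : P a) : P b := by
  obtain ⟨w⟩ := h
  induction w with
  | nil => exact ha
  | cons hab _ ih => exact ih (hP _ _ hab ha)

theorem IsKConnected.fiveSep [Fintype V] {G : SimpleGraph V} (hG : IsKConnected 5 G) :
    FiveSep G := by
  rintro D X ⟨d, hdD, hdX⟩ hN ⟨z, hzD, hzX⟩
  by_contra hX
  have hc := hG.2 (X : Set V) (by rw [Set.ncard_coe_finset]; omega)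
  refine hzD (reachable_closed (P := fun w => w.1 ∈ D) (fun a b hab ha => ?_)
    (hc.preconnected ⟨d, by simpa using hdX⟩ ⟨z, by simpa using hzX⟩) hdD)
  exact (hN a.1 ha b.1 hab).resolve_right fun h => b.2 (by simpa using h)

/-- A disconnected vertex-deleted subgraph yields a separation of the graph. -/
theorem exists_separation {W : Type*} {H : SimpleGraph W} {T : Set W}
    (h : ¬ (H.induce Tᶜ).Preconnected) :
    ∃ A B : Set W, A.Nonempty ∧ B.Nonempty ∧ Disjoint A B ∧ A ∪ B = Tᶜ ∧
      ∀ a ∈ A, ∀ b ∈ B, ¬ H.Adj a b := by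
  rw [SimpleGraph.Preconnected] at h
  push Not at h
  obtain ⟨a, b, hab⟩ := h
  refine ⟨{w | ∃ hw : w ∈ Tᶜ, (H.induce Tᶜ).Reachable a ⟨w, hw⟩},
    {w | ∃ hw : w ∈ Tᶜ, ¬ (H.induce Tᶜ).Reachable a ⟨w, hw⟩}, ⟨a.1, a.2, Reachable.refl _⟩,
    ⟨b.1, b.2, hab⟩, ?_, ?_, ?_⟩
  · rw [Set.disjoint_left]
    rintro w ⟨hw, h1⟩ ⟨_, h2⟩
    exact h2 h1
  · ext w
    simp only [Set.mem_union, Set.mem_ofPred_eq]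
    constructor
    · rintro (⟨hw, -⟩ | ⟨hw, -⟩) <;> exact hw
    · intro hw
      by_cases hr : (H.induce Tᶜ).Reachable a ⟨w, hw⟩
      · exact Or.inl ⟨hw, hr⟩
      · exact Or.inr ⟨hw, hr⟩
  · rintro w ⟨hw, h1⟩ w' ⟨hw', h2⟩ hadj
    exact h2 (h1.trans (Adj.reachable (by simpa using hadj)))

variable [DecidableEq V] {G : SimpleGraph V} {x y : V}

theorem contractE_adj {a b : {v : V // v ≠ y}} (h : G.Adj a.1 b.1) :
    (contractE G x y).Adj a b :=
  (SimpleGraph.fromRel_adj _ _ _).2 ⟨fun e => h.ne (congrArg _ e), Or.inl (Or.inl h)⟩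

theorem contractE_adj' (hxy : x ≠ y) {b : {v : V // v ≠ y}} (hb : b ≠ ⟨x, hxy⟩)
    (h : G.Adj y b.1) : (contractE G x y).Adj ⟨x, hxy⟩ b :=
  (SimpleGraph.fromRel_adj _ _ _).2 ⟨hb.symm, Or.inl (Or.inr (Or.inl ⟨rfl, h⟩))⟩

variable [Fintype V]

open Classical in
/-- A set of vertices of the contracted graph, as a set of vertices of the original graph. -/
noncomputable def up (T : Set {v : V // v ≠ y}) : Finset V := (Subtype.val '' T).toFinset

theorem mem_up {T : Set {v : V // v ≠ y}} {v : V} : v ∈ up T ↔ ∃ h : v ≠ y, ⟨v, h⟩ ∈ T := by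
  simp [up]

theorem card_up (T : Set {v : V // v ≠ y}) : (up T).card = T.ncard := by
  rw [up, ← Set.ncard_eq_toFinset_card', Set.ncard_image_of_injective _ Subtype.val_injective]

/-- In `G`, a vertex of the side `A` of a separation of `G / xy` has all its neighbours other than
`y` in `A` or in the separator. -/
theorem mem_up_of_adj {T A B : Set {v : V // v ≠ y}} (hc : A ∪ B = Tᶜ)
    (hno : ∀ a ∈ A, ∀ b ∈ B, ¬ (contractE G x y).Adj a b) {a b : V} (ha : a ∈ up A)
    (hab : G.Adj a b) (hby : b ≠ y) : b ∈ up A ∨ b ∈ up T := by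
  rw [mem_up] at ha
  obtain ⟨hay, ha⟩ := ha
  by_cases hbT : (⟨b, hby⟩ : {v : V // v ≠ y}) ∈ T
  · exact Or.inr (mem_up.2 ⟨hby, hbT⟩)
  · have hb : (⟨b, hby⟩ : {v : V // v ≠ y}) ∈ A ∪ B := by rw [hc]; exact hbT
    rcases hb with hb | hb
    · exact Or.inl (mem_up.2 ⟨hby, hb⟩)
    · exact (hno _ ha _ hb (contractE_adj hab)).elim

/-- If the contracted vertex lies in the side `B` of a separation of `G / xy`, then adding `y` to
that side gives a separation of `G` of the same order. -/
theorem five_le_of_mem (hK : FiveSep G) (hxy : x ≠ y) {T A B : Set {v : V // v ≠ y}}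
    (hA : A.Nonempty) (hd : Disjoint A B) (hc : A ∪ B = Tᶜ)
    (hno : ∀ a ∈ A, ∀ b ∈ B, ¬ (contractE G x y).Adj a b)
    (hx : (⟨x, hxy⟩ : {v : V // v ≠ y}) ∈ B) : 5 ≤ T.ncard := by
  rw [← card_up]
  obtain ⟨a, ha⟩ := hA
  refine hK (up A) (up T) ⟨a.1, mem_up.2 ⟨a.2, ha⟩, fun h => ?_⟩ ?_
    ⟨y, fun h => (mem_up.1 h).1 rfl, fun h => (mem_up.1 h).1 rfl⟩
  · obtain ⟨_, haT⟩ := mem_up.1 h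
    exact (hc ▸ Or.inl ha : a ∈ Tᶜ) haT
  · intro b hb w hbw
    by_cases hw : w = y
    · subst hw
      obtain ⟨hbw', hbA⟩ := mem_up.1 hb
      refine (hno _ hbA _ hx (contractE_adj' hxy (fun e => ?_) hbw.symm).symm).elim
      exact Set.disjoint_left.1 hd hbA (e ▸ hx)
    · exact mem_up_of_adj hc hno hb hbw hw

/-- A separation of `G / xy` of order less than five has order four, and its separator contains the
vertex obtained by the contraction: otherwise `y` can be added to a side. -/
theorem contract_separation (hK : FiveSep G) (hxy : x ≠ y) {T A B : Set {v : V // v ≠ y}}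
    (hA : A.Nonempty) (hB : B.Nonempty) (hd : Disjoint A B) (hc : A ∪ B = Tᶜ)
    (hno : ∀ a ∈ A, ∀ b ∈ B, ¬ (contractE G x y).Adj a b) :
    5 ≤ T.ncard ∨ 4 ≤ T.ncard ∧ (⟨x, hxy⟩ : {v : V // v ≠ y}) ∈ T := by
  by_cases hx : (⟨x, hxy⟩ : {v : V // v ≠ y}) ∈ T
  · refine Or.inr ⟨?_, hx⟩
    rw [← card_up]
    obtain ⟨a, ha⟩ := hA
    obtain ⟨b, hb⟩ := hB
    have hle := hK (up A) (insert y (up T)) ⟨a.1, mem_up.2 ⟨a.2, ha⟩, fun h => ?_⟩ ?_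
      ⟨b.1, fun h => ?_, fun h => ?_⟩
    · have := Finset.card_insert_le y (up T)
      omega
    · rcases Finset.mem_insert.1 h with h | h
      · exact a.2 h
      · exact (hc ▸ Or.inl ha : a ∈ Tᶜ) (mem_up.1 h).2
    · intro a ha b hab
      by_cases hby : b = y
      · exact Or.inr (by simp [hby])
      · exact (mem_up_of_adj hc hno ha hab hby).imp_right fun h => Finset.mem_insert_of_mem h
    · exact Set.disjoint_left.1 hd (mem_up.1 h).2 hb
    · rcases Finset.mem_insert.1 h with h | h
      · exact b.2 h
      · exact (hc ▸ Or.inr hb : b ∈ Tᶜ) (mem_up.1 h).2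
  · left
    have hx' : (⟨x, hxy⟩ : {v : V // v ≠ y}) ∈ A ∪ B := by rw [hc]; exact hx
    rcases hx' with h | h
    · exact five_le_of_mem hK hxy hB hd.symm (by rw [Set.union_comm, hc])
        (fun b hb a ha e => hno a ha b hb e.symm) h
    · exact five_le_of_mem hK hxy hA hd hc hno h

theorem contract_connected (hG : IsKConnected 5 G) (hxy : x ≠ y) :
    IsKConnected 4 (contractE G x y) := by
  have hcard : 5 ≤ Fintype.card {v : V // v ≠ y} := by
    have h1 := hG.1
    have h2 : Fintype.card {v : V // v ≠ y} = Fintype.card V - 1 := by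
      simp [Fintype.card_subtype_compl]
    omega
  refine ⟨hcard, fun T hT => ?_⟩
  have hne : Nonempty (Tᶜ : Set {v : V // v ≠ y}) := by
    by_contra h
    rw [Set.nonempty_coe_sort, Set.not_nonempty_iff_eq_empty, Set.compl_empty_iff] at h
    rw [h, Set.ncard_univ, Nat.card_eq_fintype_card] at hT
    omega
  have hpre : ((contractE G x y).induce Tᶜ).Preconnected := by
    by_contra hcon
    obtain ⟨A, B, hA, hB, hd, hc, hno⟩ := exists_separation hcon
    rcases contract_separation hG.fiveSep hxy hA hB hd hc hno with h | h <;> omega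
  exact ⟨hpre⟩

/-- If the contraction of an edge of a 5-connected graph is not quasi 5-connected, then the edge
lies in a nontrivial 5-cut. -/
theorem exists_cut (hG : IsKConnected 5 G) (hxy : G.Adj x y)
    (hq : ¬ QuasiFiveConnected (contractE G x y)) :
    ∃ S B C : Finset V, Cut G S B C ∧ x ∈ S ∧ y ∈ S := by
  have hcut : ∃ T, IsNontrivialFourCut (contractE G x y) T := by
    by_contra h
    push Not at h
    exact hq ⟨contract_connected hG hxy.ne, h⟩
  obtain ⟨T, hT, A, B, hA, hB, hd, hc, hno⟩ := hcut
  have hAne : A.Nonempty := Set.nonempty_of_ncard_ne_zero (by omega)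
  have hBne : B.Nonempty := Set.nonempty_of_ncard_ne_zero (by omega)
  have hxT : (⟨x, hxy.ne⟩ : {v : V // v ≠ y}) ∈ T := by
    rcases contract_separation hG.fiveSep hxy.ne hAne hBne hd hc hno with h | h
    · omega
    · exact h.2
  have hyU : ∀ X : Set {v : V // v ≠ y}, y ∉ up X := fun X h => (mem_up.1 h).1 rfl
  have hTc : ∀ {v : {v : V // v ≠ y}}, v ∈ A ∪ B → v ∉ T := fun h => by
    rw [hc] at h
    exact h
  refine ⟨insert y (up T), up A, up B, ⟨?_, ?_, ?_, ?_, ?_, ?_, ?_, ?_⟩,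
    Finset.mem_insert_of_mem (mem_up.2 ⟨hxy.ne, hxT⟩), Finset.mem_insert_self _ _⟩
  · rw [Finset.card_insert_of_notMem (hyU T), card_up, hT]
  · rwa [card_up]
  · rwa [card_up]
  · intro v hv hvA
    rcases Finset.mem_insert.1 hv with rfl | hv
    · exact hyU A hvA
    · exact hTc (Or.inl (mem_up.1 hvA).2) (mem_up.1 hv).2
  · intro v hv hvB
    rcases Finset.mem_insert.1 hv with rfl | hv
    · exact hyU B hvB
    · exact hTc (Or.inr (mem_up.1 hvB).2) (mem_up.1 hv).2
  · exact fun v hvA hvB => Set.disjoint_left.1 hd (mem_up.1 hvA).2 (mem_up.1 hvB).2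
  · intro v
    by_cases hvy : v = y
    · exact Or.inl (by simp [hvy])
    by_cases hvT : (⟨v, hvy⟩ : {v : V // v ≠ y}) ∈ T
    · exact Or.inl (Finset.mem_insert_of_mem (mem_up.2 ⟨hvy, hvT⟩))
    · have hv : (⟨v, hvy⟩ : {v : V // v ≠ y}) ∈ A ∪ B := by rw [hc]; exact hvT
      exact Or.inr (hv.imp (fun h => mem_up.2 ⟨hvy, h⟩) (fun h => mem_up.2 ⟨hvy, h⟩))
  · intro a ha b hb hab
    exact hno _ (mem_up.1 ha).2 _ (mem_up.1 hb).2 (contractE_adj hab)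

end Contraction

/-- Every 5-connected graph contains an edge whose contraction
yields a quasi 5-connected graph. -/
theorem stmt0 {V : Type*} [Fintype V] [DecidableEq V] (G : SimpleGraph V)
    (hG : IsKConnected 5 G) :
    ∃ x y : V, G.Adj x y ∧ QuasiFiveConnected (contractE G x y) := by
  by_contra hcon
  push Not at hcon
  have hK := hG.fiveSep
  have hE : EdgeCovered G := fun x y hxy => exists_cut hG hxy (hcon x y hxy)
  obtain ⟨x, y, hxy⟩ : ∃ x y, G.Adj x y := by
    obtain ⟨v, z, hvz⟩ := Fintype.one_lt_card_iff.1 (by have := hG.1; omega : 1 < Fintype.card V)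
    by_contra hno
    push Not at hno
    have := hK {v} ∅ ⟨v, by simp, by simp⟩ (fun a _ b hab => (hno a b hab).elim)
      ⟨z, by simpa using hvz.symm, by simp⟩
    simp at this
  obtain ⟨T, A, A', h, -, -⟩ := hE x y hxy
  obtain ⟨S, B, C, k, hB⟩ := exists_pair hK hE h
  obtain ⟨u, v, huv, rfl⟩ := Finset.card_eq_two.1 hB
  exact no_pair hK hE k huv
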